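/- Let k₁, k₂ > 1, t ∈ ℝ, 0 < φ < π, and ρ, σ ≥ 0. Then as x → +∞, [Φ_ρ, Φ_σ](x) = D⁺(ρ,σ)(ρ+σ)|x|^{i(σ−ρ)}(1 + O(1/x)), and as x → −∞, [Φ_ρ, Φ_σ](x) = −D⁻(ρ,σ)(ρ+σ)|x|^{i(σ−ρ)}(1 + O(1/x)), where D^{±}(ρ,σ) = (i/2π) e^{t(2φ−π)} e^{±(π/2)(ρ+σ+2t)}. -/

import Mathlib

noncomputable section

open MeasureTheory Filter Topology Set Asymptotics ComplexConjugate
open Complex (I)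
/-- Pochhammer symbol `(a)ₙ = a(a+1)⋯(a+n-1)`. -/
def poch (a : ℂ) (n : ℕ) : ℂ := ∏ k ∈ Finset.range n, (a + k)

/-- Generalized hypergeometric series `ₚF_q(a; b; z)` as a sum. -/
def pFq (a b : List ℂ) (z : ℂ) : ℂ :=
  ∑' n : ℕ, ((a.map fun c => poch c n).prod / (b.map fun c => poch c n).prod) * z ^ n /
    (n.factorial : ℂ)

def F32 (a b c d e z : ℂ) : ℂ := pFq [a, b, c] [d, e] z

/-- The weight function `w(z)`. -/
def wfun (k₁ k₂ t φ : ℝ) (z : ℂ) : ℂ :=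
  ((1 / (2 * Real.pi) : ℝ) : ℂ) *
    Complex.exp ((2 * z + (t : ℂ)) * (2 * (φ : ℂ) - (Real.pi : ℂ))) *
    Complex.Gamma ((k₁ : ℂ) + I * t + I * z) * Complex.Gamma ((k₁ : ℂ) - I * t - I * z) *
    Complex.Gamma ((k₂ : ℂ) + I * z) * Complex.Gamma ((k₂ : ℂ) - I * z)

/-- `α₋(z) = −e^{−2iφ}(k₂ + iz)(k₁ + i(t+z))`. -/
def alphaM (k₁ k₂ t φ : ℝ) (z : ℂ) : ℂ :=
  -Complex.exp (-2 * I * φ) * ((k₂ : ℂ) + I * z) * ((k₁ : ℂ) + I * ((t : ℂ) + z))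

/-- `f*(z) = conj (f (conj z))`. -/
def fstar (f : ℂ → ℂ) (z : ℂ) : ℂ := conj (f (conj z))

/-- The Wronskian `[f,g](y)`, an integral along the vertical segment from `y` to `y+i`. -/
def Wron (k₁ k₂ t φ : ℝ) (f g : ℂ → ℂ) (y : ℝ) : ℂ :=
  ∫ s in (0:ℝ)..1, I *
    ((f ((y : ℂ) + I * s) * fstar g ((y : ℂ) + I * s - I) -
        f ((y : ℂ) + I * s - I) * fstar g ((y : ℂ) + I * s)) *
      alphaM k₁ k₂ t φ ((y : ℂ) + I * s) * wfun k₁ k₂ t φ ((y : ℂ) + I * s))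

/-- The `i`-periodic function `p(z) = (1/π) e^{πz} sin(π(k₁ − it − iz))`. -/
def pper (k₁ t : ℝ) (z : ℂ) : ℂ :=
  (1 / (Real.pi : ℂ)) * Complex.exp ((Real.pi : ℂ) * z) *
    Complex.sin ((Real.pi : ℂ) * ((k₁ : ℂ) - I * t - I * z))

/-- The second eigenfunction `Φ_ρ`. -/
def PhiC (k₁ k₂ t φ : ℝ) (ρ : ℂ) (z : ℂ) : ℂ :=
  Complex.exp (-2 * (φ : ℂ) * z) * pper k₁ t z *
    (Complex.Gamma (1 - (k₁ : ℂ) + I * t + I * z) * Complex.Gamma (1 - (k₂ : ℂ) + I * z) /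
      (Complex.Gamma ((k₁ : ℂ) + I * z + I * t) *
        Complex.Gamma (3/2 - (k₁ : ℂ) + I * z + I * ρ))) *
    F32 ((k₂ : ℂ) - (k₁ : ℂ) + 1/2 + I * ρ) (3/2 - (k₁ : ℂ) - (k₂ : ℂ) + I * ρ)
      (1/2 - I * t + I * ρ) (1 + 2 * I * ρ) (3/2 - (k₁ : ℂ) + I * z + I * ρ) 1

/-- The constant `D^{±}(ρ,σ) = (i/2π) e^{t(2φ−π)} e^{±(π/2)(ρ+σ+2t)}`. -/
def Dpm (t φ : ℝ) (sgn : ℝ) (ρ σ : ℝ) : ℂ :=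
  (I / ((2 * Real.pi : ℝ) : ℂ)) * Complex.exp (((t * (2 * φ - Real.pi) : ℝ) : ℂ)) *
    Complex.exp (((sgn * (Real.pi / 2) * (ρ + σ + 2 * t) : ℝ) : ℂ))


lemma poch_succ (a : ℂ) (n : ℕ) : poch a (n+1) = poch a n * (a + n) := by
  simp [poch, Finset.prod_range_succ]

lemma poch_zero' (a : ℂ) : poch a 0 = 1 := by simp [poch]

lemma GammaSeq_eq_poch (a : ℂ) (n : ℕ) :
    Complex.GammaSeq a n = (n:ℂ) ^ a * n.factorial / poch a (n+1) := by
  simp [Complex.GammaSeq, poch]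

lemma poch_lower (a : ℂ) : ∃ K : ℝ, 0 < K ∧ ∀ n : ℕ, 1 ≤ n →
    (n:ℝ) ^ a.re * n.factorial / ‖poch a (n+1)‖ ≤ K := by
  have h := (Complex.GammaSeq_tendsto_Gamma a).norm.bddAbove_range
  obtain ⟨K, hK⟩ := h
  refine ⟨max K 1, by positivity, fun n hn => ?_⟩
  have := hK ⟨n, rfl⟩
  simp only [GammaSeq_eq_poch, norm_div, norm_mul, Complex.norm_natCast] at this
  rw [Complex.norm_natCast_cpow_of_pos (by omega)] at this
  exact this.trans (le_max_left _ _)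

lemma poch_eq_zero_of_le {m n : ℕ} (h : m < n) : poch (-(m:ℂ)) n = 0 := by
  unfold poch
  exact Finset.prod_eq_zero (Finset.mem_range.2 h) (by simp)

lemma poch_upper (a : ℂ) : ∃ K : ℝ, 0 < K ∧ ∀ n : ℕ, 1 ≤ n →
    ‖poch a (n+1)‖ ≤ K * ((n:ℝ) ^ a.re * n.factorial) := by
  suffices h : ∃ K : ℝ, ∀ n : ℕ, 1 ≤ n →
      ‖poch a (n+1)‖ / ((n:ℝ) ^ a.re * n.factorial) ≤ K by
    obtain ⟨K, hK⟩ := h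
    refine ⟨max K 1, by positivity, fun n hn => ?_⟩
    have hn' : (0:ℝ) < n := by exact_mod_cast hn
    have : (0:ℝ) < (n:ℝ) ^ a.re * n.factorial := by positivity
    rw [← div_le_iff₀ this]
    exact (hK n hn).trans (le_max_left _ _)
  by_cases ha : ∀ m : ℕ, a ≠ -m
  · have h := ((Complex.GammaSeq_tendsto_Gamma a).inv₀ (Complex.Gamma_ne_zero ha)).norm.bddAbove_range
    obtain ⟨K, hK⟩ := h
    refine ⟨K, fun n hn => ?_⟩
    have := hK ⟨n, rfl⟩
    simp only [GammaSeq_eq_poch, norm_inv, norm_div, norm_mul, Complex.norm_natCast, inv_div] at this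
    rwa [Complex.norm_natCast_cpow_of_pos (by omega)] at this
  · push Not at ha
    obtain ⟨m, rfl⟩ := ha
    have h : Tendsto (fun n : ℕ => ‖poch (-(m:ℂ)) (n+1)‖ / ((n:ℝ) ^ (-(m:ℂ)).re * n.factorial)) atTop (𝓝 0) := by
      apply tendsto_const_nhds.congr'
      filter_upwards [eventually_gt_atTop m] with n hn
      rw [poch_eq_zero_of_le (by omega)]; simp
    obtain ⟨K, hK⟩ := h.bddAbove_range
    exact ⟨K, fun n _ => hK ⟨n, rfl⟩⟩

/-- term of the series -/
def hT (A B C D e : ℂ) (n : ℕ) : ℂ :=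
  poch A n * poch B n * poch C n / (poch D n * poch 1 n * poch e n)

lemma poch_one (n : ℕ) : poch 1 n = n.factorial := by
  induction n with
  | zero => simp [poch]
  | succ n ih => rw [poch_succ, ih, Nat.factorial_succ]; push_cast; ring

lemma F32_eq (A B C D e : ℂ) : F32 A B C D e 1 = ∑' n, hT A B C D e n := by
  unfold F32 pFq
  refine tsum_congr fun n => ?_
  simp only [List.map_cons, List.map_nil, List.prod_cons, List.prod_nil, hT, poch_one, one_pow,
    mul_one]
  rw [div_div]; congr 1 <;> ring

lemma hT_bound (A B C D e : ℂ) : ∃ K : ℝ, 0 < K ∧ ∀ n : ℕ, 1 ≤ n →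
    ‖hT A B C D e (n+1)‖ ≤ K * (n:ℝ) ^ ((A+B+C-D-e).re - 1) := by
  obtain ⟨KA, hA, HA⟩ := poch_upper A
  obtain ⟨KB, hB, HB⟩ := poch_upper B
  obtain ⟨KC, hC, HC⟩ := poch_upper C
  obtain ⟨KD, hD, HD⟩ := poch_lower D
  obtain ⟨K1, h1, H1⟩ := poch_lower 1
  obtain ⟨Ke, he, He⟩ := poch_lower e
  refine ⟨KA * KB * KC * KD * K1 * Ke, by positivity, fun n hn => ?_⟩
  have hn' : (0:ℝ) < n := by exact_mod_cast hn
  have hf : (0:ℝ) < n.factorial := by positivity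
  specialize HA n hn; specialize HB n hn; specialize HC n hn
  specialize HD n hn; specialize H1 n hn; specialize He n hn
  have key : ∀ (K x p : ℝ), 0 ≤ p → x / p ≤ K → 0 < x → p⁻¹ ≤ K / x := by
    intro K x p hp h hx
    rw [le_div_iff₀ hx, mul_comm]; exact h
  have HD' := key _ _ _ (norm_nonneg _) HD (by positivity)
  have H1' := key _ _ _ (norm_nonneg _) H1 (by positivity)
  have He' := key _ _ _ (norm_nonneg _) He (by positivity)
  have : ‖hT A B C D e (n+1)‖ = ‖poch A (n+1)‖ * ‖poch B (n+1)‖ * ‖poch C (n+1)‖ *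
      (‖poch D (n+1)‖⁻¹ * ‖poch 1 (n+1)‖⁻¹ * ‖poch e (n+1)‖⁻¹) := by
    simp only [hT, norm_div, norm_mul]
    rw [div_eq_mul_inv, mul_inv, mul_inv]
  rw [this]
  calc _ ≤ (KA * ((n:ℝ) ^ A.re * n.factorial)) * (KB * ((n:ℝ) ^ B.re * n.factorial)) *
        (KC * ((n:ℝ) ^ C.re * n.factorial)) * ((KD / ((n:ℝ) ^ D.re * n.factorial)) *
        (K1 / ((n:ℝ) ^ (1:ℂ).re * n.factorial)) * (Ke / ((n:ℝ) ^ e.re * n.factorial))) := by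
        gcongr
    _ = KA * KB * KC * KD * K1 * Ke * ((n:ℝ) ^ A.re * (n:ℝ) ^ B.re * (n:ℝ) ^ C.re /
        ((n:ℝ) ^ D.re * (n:ℝ) ^ (1:ℂ).re * (n:ℝ) ^ e.re)) := by
        field_simp
    _ = _ := by
        congr 1
        rw [← Real.rpow_add hn', ← Real.rpow_add hn', ← Real.rpow_add hn', ← Real.rpow_add hn',
          ← Real.rpow_sub hn']
        congr 1
        simp; ring

lemma hT_summable (A B C D e : ℂ) (h : (A+B+C-D-e).re < 0) :
    Summable fun n => ‖hT A B C D e n‖ := by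
  obtain ⟨K, hK, H⟩ := hT_bound A B C D e
  rw [← summable_nat_add_iff 2]
  have hs : Summable fun n : ℕ => K * ((n+1:ℕ):ℝ) ^ ((A+B+C-D-e).re - 1) := by
    apply Summable.mul_left
    rw [summable_nat_add_iff 1 (f := fun n : ℕ => (n:ℝ) ^ ((A+B+C-D-e).re - 1))]
    rw [Real.summable_nat_rpow]; linarith
  refine Summable.of_nonneg_of_le (fun _ => norm_nonneg _) (fun n => ?_) hs
  exact H (n+1) (by omega)

lemma hT_succ (A B C D e : ℂ) (n : ℕ) : hT A B C D e (n+1) = hT A B C D e n *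
    ((A+n)*(B+n)*(C+n)/((D+n)*(1+n)*(e+n))) := by
  simp only [hT, poch_succ]
  rw [div_mul_div_comm]; congr 1 <;> ring

lemma hT_n2_tendsto (A B C D e : ℂ) (h : (A+B+C-D-e).re < -1) (c : ℂ) :
    Tendsto (fun n : ℕ => (n:ℂ) * (n + c) * hT A B C D e n) atTop (𝓝 0) := by
  obtain ⟨K, hK, H⟩ := hT_bound A B C D e
  rw [← tendsto_add_atTop_iff_nat 1]
  have h0 : Tendsto (fun n : ℕ => (2 * (2 + ‖c‖) * K) * (n:ℝ) ^ ((A+B+C-D-e).re + 1)) atTop (𝓝 0) := by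
    rw [← mul_zero (2 * (2 + ‖c‖) * K)]
    apply Tendsto.const_mul
    have := (tendsto_rpow_neg_atTop (y := -((A+B+C-D-e).re + 1)) (by linarith)).comp
      tendsto_natCast_atTop_atTop
    simpa [Function.comp_def] using this
  refine squeeze_zero_norm' ?_ h0
  filter_upwards [eventually_ge_atTop 1] with n hn
  have hn' : (1:ℝ) ≤ n := by exact_mod_cast hn
  rw [norm_mul, norm_mul]
  have e1 : ‖((n+1:ℕ):ℂ)‖ ≤ 2 * n := by
    rw [Complex.norm_natCast]; push_cast; linarith
  have e2 : ‖((n+1:ℕ):ℂ) + c‖ ≤ (2 + ‖c‖) * n := by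
    refine (norm_add_le _ _).trans ?_
    nlinarith [norm_nonneg c]
  calc _ ≤ (2 * n) * ((2 + ‖c‖) * n) * (K * (n:ℝ) ^ ((A+B+C-D-e).re - 1)) := by
        gcongr; exact H n hn
    _ = (2 * (2 + ‖c‖) * K) * ((n:ℝ) ^ ((A+B+C-D-e).re - 1) * (n:ℝ) ^ (2:ℝ)) := by
        rw [Real.rpow_two]; ring
    _ = _ := by
        rw [← Real.rpow_add (by linarith)]; ring_nf

/-- three term relation -/
lemma F32_three_term (A B C D e : ℂ) (h : (A+B+C-D-(e-1)).re < 0) (hD : ∀ n : ℕ, D + n ≠ 0)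
    (he1 : e - 1 ≠ 0) (he : ∀ n : ℕ, e + n ≠ 0) :
    e * (e-1) * (D+e-A-B-C-1) * F32 A B C D (e-1) 1 + (e-A)*(e-B)*(e-C) * F32 A B C D (e+1) 1
      = (e*(D+e-A-B-C-1)*(e-1) + (e-A)*(e-B)*(e-C) + A*B*C) * F32 A B C D e 1 := by
  simp only [F32_eq]
  have s0 := (hT_summable A B C D (e-1) h).of_norm.hasSum
  have s1 := (hT_summable A B C D e (by simp at h ⊢; linarith)).of_norm.hasSum
  have s2 := (hT_summable A B C D (e+1) (by simp at h ⊢; linarith)).of_norm.hasSum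
  have he0 : e ≠ 0 := by simpa using he 0
  have pe : ∀ n, poch e n ≠ 0 := fun n => by
    unfold poch; exact Finset.prod_ne_zero_iff.2 fun k _ => he k
  have r0 : ∀ n, poch (e-1) n * (e - 1 + n) = (e-1) * poch e n := by
    intro n
    induction n with
    | zero => simp [poch]
    | succ n ih => rw [poch_succ, poch_succ, ih]; push_cast; ring
  have r2 : ∀ n, e * poch (e+1) n = poch e n * (e + n) := by
    intro n
    induction n with
    | zero => simp [poch]
    | succ n ih => rw [poch_succ, poch_succ, ← mul_assoc, ih]; push_cast; ring
  have q0 : ∀ n, hT A B C D (e-1) n * (e-1) = hT A B C D e n * (e - 1 + n) := by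
    intro n
    by_cases hz : e - 1 + n = 0
    · exfalso
      rcases n with _ | n
      · simp at hz; exact he1 hz
      · apply he n; push_cast at hz; linear_combination hz
    have := r0 n
    have hp : poch (e-1) n ≠ 0 := by
      intro h0; rw [h0, zero_mul] at this
      exact mul_ne_zero he1 (pe n) this.symm
    simp only [hT]
    rw [div_mul_eq_mul_div, div_mul_eq_mul_div]
    by_cases hd : poch D n * poch 1 n = 0
    · simp [hd]
    rw [div_eq_div_iff (mul_ne_zero hd hp) (mul_ne_zero hd (pe n))]
    linear_combination (-(poch A n * poch B n * poch C n * (poch D n * poch 1 n))) * this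
  have q2 : ∀ n, hT A B C D (e+1) n * (e + n) = hT A B C D e n * e := by
    intro n
    have := r2 n
    have hp : poch (e+1) n ≠ 0 := by
      intro h0; rw [h0, mul_zero] at this
      exact mul_ne_zero (pe n) (he n) this.symm
    simp only [hT]
    rw [div_mul_eq_mul_div, div_mul_eq_mul_div]
    by_cases hd : poch D n * poch 1 n = 0
    · simp [hd]
    rw [div_eq_div_iff (mul_ne_zero hd hp) (mul_ne_zero hd (pe n))]
    linear_combination (-(poch A n * poch B n * poch C n * (poch D n * poch 1 n))) * this
  set R : ℕ → ℂ := fun n => -e * ((n:ℂ) * (n + (D - 1)) * hT A B C D e n) with hR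
  have hR0 : Tendsto R atTop (𝓝 0) := by
    rw [← mul_zero (-e)]
    exact (hT_n2_tendsto A B C D e (by simp at h ⊢; linarith) (D-1)).const_mul _
  have tot := ((s0.mul_left (e * (e-1) * (D+e-A-B-C-1))).add
    (s2.mul_left ((e-A)*(e-B)*(e-C)))).sub
    (s1.mul_left (e*(D+e-A-B-C-1)*(e-1) + (e-A)*(e-B)*(e-C) + A*B*C))
  have tel : ∀ n, e * (e-1) * (D+e-A-B-C-1) * hT A B C D (e-1) n +
      (e-A)*(e-B)*(e-C) * hT A B C D (e+1) n -
      (e*(D+e-A-B-C-1)*(e-1) + (e-A)*(e-B)*(e-C) + A*B*C) * hT A B C D e n = R (n+1) - R n := by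
    intro n
    have hn1 : (1 + (n:ℂ)) ≠ 0 := by
      have := Nat.cast_add_one_ne_zero (R := ℂ) n
      rwa [add_comm] at this
    have e2 : hT A B C D (e+1) n = hT A B C D e n * e / (e + n) := by
      rw [eq_div_iff (he n)]; exact q2 n
    have e0 : hT A B C D (e-1) n = hT A B C D e n * (e - 1 + n) / (e-1) := by
      rw [eq_div_iff he1]; exact q0 n
    simp only [hR]
    rw [hT_succ, e2, e0]
    have := he n
    have := hD n
    push_cast
    field_simp
    ring
  have hz := tot.tendsto_sum_nat
  simp only [tel, Finset.sum_range_sub] at hz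
  have hz' : Tendsto (fun n => R n - R 0) atTop (𝓝 0) := by
    have : R 0 = 0 := by simp [hR]
    simpa [this] using hR0
  exact sub_eq_zero.1 (tendsto_nhds_unique hz hz')

lemma base_le {r : ℝ} {e : ℂ} (h1 : r ≤ e.re) (h2 : |r| + 1 ≤ |e.im|) (j : ℕ) :
    ‖(r:ℂ) + I + j‖ ≤ ‖e + j‖ := by
  rw [← sq_le_sq₀ (norm_nonneg _) (norm_nonneg _), ← Complex.normSq_eq_norm_sq,
    ← Complex.normSq_eq_norm_sq, Complex.normSq_apply, Complex.normSq_apply]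
  simp only [Complex.add_re, Complex.add_im, Complex.ofReal_re, Complex.ofReal_im, Complex.I_re,
    Complex.I_im, Complex.natCast_re, Complex.natCast_im, add_zero, zero_add]
  have hj : (0:ℝ) ≤ j := Nat.cast_nonneg j
  have h3 : (|r|+1)^2 ≤ e.im * e.im := by
    rw [← sq, ← sq_abs e.im]; gcongr
  by_cases hc : 0 ≤ r + j
  · nlinarith [abs_nonneg r]
  · push Not at hc
    have : |r| = -r := abs_of_neg (by linarith)
    rw [this] at h3
    nlinarith [mul_self_nonneg (e.re + j)]

lemma poch_base_le {r : ℝ} {e : ℂ} (h1 : r ≤ e.re) (h2 : |r| + 1 ≤ |e.im|) (n : ℕ) :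
    ‖poch ((r:ℂ) + I) n‖ ≤ ‖poch e n‖ := by
  unfold poch
  rw [norm_prod, norm_prod]
  exact Finset.prod_le_prod (fun _ _ => norm_nonneg _) (fun j _ => base_le h1 h2 j)

lemma poch_add_two (e : ℂ) (n : ℕ) : poch e (n+2) = e * (e+1) * ∏ k ∈ Finset.range n, (e + ((k+2:ℕ):ℂ)) := by
  unfold poch
  rw [Finset.prod_range_succ', Finset.prod_range_succ']
  push_cast
  ring_nf

lemma poch_base_le2 {r : ℝ} {e : ℂ} (h1 : r ≤ e.re) (h2 : |r| + 1 ≤ |e.im|) (n : ℕ) :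
    ‖poch ((r:ℂ) + I) (n+2)‖ * |e.im|^2 ≤ (‖(r:ℂ)+I‖ * ‖(r:ℂ)+I+1‖) * ‖poch e (n+2)‖ := by
  rw [poch_add_two, poch_add_two, norm_mul, norm_mul, norm_mul, norm_mul, norm_prod, norm_prod]
  have hp := Finset.prod_le_prod (s := Finset.range n) (fun _ _ => norm_nonneg _)
    (fun j _ => base_le h1 h2 (j+2))
  have i1 : |e.im| ≤ ‖e‖ := Complex.abs_im_le_norm e
  have i2 : |e.im| ≤ ‖e+1‖ := by simpa using Complex.abs_im_le_norm (e+1)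
  have i3 : |e.im|^2 ≤ ‖e‖ * ‖e+1‖ := by
    rw [sq]; exact mul_le_mul i1 i2 (abs_nonneg _) (norm_nonneg _)
  calc _ ≤ (‖(r:ℂ)+I‖ * ‖(r:ℂ)+I+1‖ * ∏ k ∈ Finset.range n, ‖e + ((k+2:ℕ):ℂ)‖) * (‖e‖ * ‖e+1‖) := by
        gcongr
    _ = _ := by ring

lemma poch_ne_zero_of_im {e : ℂ} (h : e.im ≠ 0) (n : ℕ) : poch e n ≠ 0 := by
  unfold poch
  refine Finset.prod_ne_zero_iff.2 fun k _ hk => h ?_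
  simpa using congrArg Complex.im hk

lemma hT_norm_le {A B C D : ℂ} {r : ℝ} {e : ℂ} (h1 : r ≤ e.re) (h2 : |r| + 1 ≤ |e.im|) (n : ℕ) :
    ‖hT A B C D e n‖ ≤ ‖hT A B C D ((r:ℂ) + I) n‖ := by
  simp only [hT, norm_div, norm_mul]
  have h0 : 0 < ‖poch ((r:ℂ)+I) n‖ := norm_pos_iff.2 (poch_ne_zero_of_im (by simp) n)
  have := poch_base_le h1 h2 n
  rw [← div_div, ← div_div _ _ ‖poch (_ + I) n‖]
  gcongr

lemma hT_norm_le2 {A B C D : ℂ} {r : ℝ} {e : ℂ} (h1 : r ≤ e.re) (h2 : |r| + 1 ≤ |e.im|) (n : ℕ) :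
    ‖hT A B C D e (n+2)‖ ≤ ‖hT A B C D ((r:ℂ) + I) (n+2)‖ * ((‖(r:ℂ)+I‖ * ‖(r:ℂ)+I+1‖) / |e.im|^2) := by
  simp only [hT, norm_div, norm_mul]
  have h0 : 0 < ‖poch ((r:ℂ)+I) (n+2)‖ := norm_pos_iff.2 (poch_ne_zero_of_im (by simp) _)
  have him : 0 < |e.im| := by linarith [abs_nonneg r]
  have h3 : 0 < ‖poch e (n+2)‖ := norm_pos_iff.2 (poch_ne_zero_of_im (abs_pos.1 him) _)
  have := poch_base_le2 h1 h2 n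
  rw [← div_div, ← div_div _ _ ‖poch (_ + I) (n+2)‖, div_mul_div_comm]
  rw [div_le_div_iff₀ h3 (by positivity)]
  refine (mul_le_mul_of_nonneg_left this (by positivity)).trans (le_of_eq ?_)
  ring

lemma F32_asymp (A B C D : ℂ) (r : ℝ) (h : (A+B+C-D).re < r) :
    ∃ K : ℝ, 0 ≤ K ∧ ∀ e : ℂ, r ≤ e.re → |r| + 1 ≤ |e.im| →
      ‖F32 A B C D e 1 - 1 - (A*B*C/D)/e‖ ≤ K / |e.im|^2 := by
  have hs := hT_summable A B C D ((r:ℂ)+I) (by simp at h ⊢; linarith)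
  refine ⟨(∑' n, ‖hT A B C D ((r:ℂ) + I) (n+2)‖) * (‖(r:ℂ)+I‖ * ‖(r:ℂ)+I+1‖), ?_, fun e h1 h2 => ?_⟩
  · have : 0 ≤ ∑' n, ‖hT A B C D ((r:ℂ) + I) (n+2)‖ := tsum_nonneg fun _ => norm_nonneg _
    positivity
  have hse : Summable fun n => ‖hT A B C D e n‖ :=
    Summable.of_nonneg_of_le (fun _ => norm_nonneg _) (fun n => hT_norm_le h1 h2 n) hs
  rw [F32_eq, ← hse.of_norm.sum_add_tsum_nat_add 2]
  have : ∑ i ∈ Finset.range 2, hT A B C D e i = 1 + (A*B*C/D)/e := by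
    simp [Finset.sum_range_succ, hT, poch]
    rw [div_div]
  rw [this, show ∀ x y : ℂ, 1 + x + y - 1 - x = y by intros; ring]
  have hs2 := (summable_nat_add_iff 2).2 hs
  have hse2 := (summable_nat_add_iff 2).2 hse
  refine (norm_tsum_le_tsum_norm hse2).trans ?_
  rw [mul_div_assoc, ← tsum_mul_right]
  exact hse2.tsum_le_tsum (fun n => hT_norm_le2 h1 h2 n) (hs2.mul_right _)

lemma F32_differentiableOn (A B C D : ℂ) (r : ℝ) (h : (A+B+C-D).re < r) :
    DifferentiableOn ℂ (fun e => F32 A B C D e 1) {e : ℂ | r < e.re ∧ |r| + 1 < |e.im|} := by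
  have hs := hT_summable A B C D ((r:ℂ)+I) (by simp at h ⊢; linarith)
  have hopen : IsOpen {e : ℂ | r < e.re ∧ |r| + 1 < |e.im|} :=
    (isOpen_lt continuous_const Complex.continuous_re).inter
      (isOpen_lt continuous_const Complex.continuous_im.abs)
  have := Complex.differentiableOn_tsum_of_summable_norm (F := fun n e => hT A B C D e n) hs
    (fun n => ?_) hopen (fun n e he => hT_norm_le he.1.le he.2.le n)
  · exact this.congr fun e _ => F32_eq A B C D e
  · intro e he
    have him : e.im ≠ 0 := by
      have : 0 < |e.im| := by linarith [abs_nonneg r, he.2]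
      exact abs_pos.1 this
    apply DifferentiableAt.differentiableWithinAt
    have hp : DifferentiableAt ℂ (fun e => poch e n) e := by
      unfold poch; fun_prop
    by_cases hd : poch D n * poch 1 n = 0
    · simp [hT, hd]
    · unfold hT
      exact (differentiableAt_const _).div ((differentiableAt_const _).mul hp)
        (mul_ne_zero hd (poch_ne_zero_of_im him n))

lemma log_sub_log' {w w' : ℂ} (h : 0 < w.im * w'.im) :
    Complex.log w' - Complex.log w = Complex.log (w' / w) := by
  have hw : w ≠ 0 := by rintro rfl; simp at h
  have hw' : w' ≠ 0 := by rintro rfl; simp at h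
  have e : w' / w = Complex.exp (Complex.log w' - Complex.log w) := by
    rw [Complex.exp_sub, Complex.exp_log hw, Complex.exp_log hw']
  rw [e, Complex.log_exp]
  · simp only [Complex.sub_im, Complex.log_im]
    rcases pos_and_pos_or_neg_and_neg_of_mul_pos h with ⟨h1, h2⟩ | ⟨h1, h2⟩
    · have := Complex.arg_nonneg_iff.2 h2.le
      have : Complex.arg w < Real.pi := Complex.arg_lt_pi_iff.2 (Or.inr h1.ne')
      linarith
    · have := Complex.neg_pi_lt_arg w'
      have := Complex.arg_neg_iff.2 h1
      linarith
  · simp only [Complex.sub_im, Complex.log_im]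
    rcases pos_and_pos_or_neg_and_neg_of_mul_pos h with ⟨h1, h2⟩ | ⟨h1, h2⟩
    · have := Complex.arg_nonneg_iff.2 h1.le
      have := Complex.arg_le_pi w'
      linarith
    · have := Complex.neg_pi_lt_arg w
      have := Complex.arg_neg_iff.2 h2
      linarith

lemma analytic_sq_bound {f : ℂ → ℂ} (hf : AnalyticAt ℂ f 0) (hd : deriv f 0 = 0) :
    (fun h => f h - f 0) =O[𝓝 0] fun h => ‖h‖ ^ 2 := by
  obtain ⟨p, hp⟩ := hf
  have := hp.isBigO_sub_partialSum_pow 2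
  have hdp := hp.deriv
  rw [hd] at hdp
  refine this.congr_left fun h => ?_
  simp only [zero_add, FormalMultilinearSeries.partialSum, Finset.sum_range_succ,
    Finset.sum_range_zero]
  congr 1
  have h1 : (p 1 fun _ => h) = 0 := by
    rw [FormalMultilinearSeries.apply_eq_pow_smul_coeff]
    have : p.coeff 1 = 0 := hdp.symm
    rw [this]; simp
  rw [h1, add_zero]
  exact hp.coeff_zero _

lemma q_bound (a b : ℂ) : ∃ K M : ℝ, 0 < K ∧ 0 < M ∧ ∀ w : ℂ, w.im ≠ 0 → M ≤ ‖w‖ →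
    ‖(w+b)/(w+a) * Complex.exp ((a-b) * (Complex.log (w+1) - Complex.log w)) - 1‖ ≤ K / ‖w‖^2 := by
  set f : ℂ → ℂ := fun h => (1+b*h)/(1+a*h) * Complex.exp ((a-b) * Complex.log (1+h)) with hf
  have hA : AnalyticAt ℂ f 0 := by
    have h1 : AnalyticAt ℂ (fun h : ℂ => Complex.log (1+h)) 0 :=
      AnalyticAt.clog (by fun_prop) (by simp [Complex.slitPlane])
    apply AnalyticAt.mul
    · exact AnalyticAt.div (by fun_prop) (by fun_prop) (by simp)
    · exact AnalyticAt.cexp (by fun_prop)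
  have hD : deriv f 0 = 0 := by
    have h1 : HasDerivAt (fun h : ℂ => Complex.log (1+h)) 1 0 := by
      have := ((hasDerivAt_id (0:ℂ)).const_add 1).clog (by simp [Complex.slitPlane])
      simpa using this
    have h2 := (h1.const_mul (a-b)).cexp
    have h3 := ((hasDerivAt_id (0:ℂ)).const_mul b).const_add 1
    have h4 := ((hasDerivAt_id (0:ℂ)).const_mul a).const_add 1
    have h5 := (h3.div h4 (by simp)).mul h2
    have h6 := h5.deriv
    have : f = ((fun x => 1 + b * id x) / fun x => 1 + a * id x) * fun h => Complex.exp ((a-b) * Complex.log (1+h)) := by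
      ext h; simp [hf]
    rw [this, h6]
    simp
  have hO := analytic_sq_bound hA hD
  obtain ⟨K, hK, hb⟩ := hO.exists_pos
  rw [IsBigOWith, Metric.eventually_nhds_iff] at hb
  obtain ⟨δ, hδ, hb⟩ := hb
  refine ⟨K, 2/δ, hK, by positivity, fun w hw hM => ?_⟩
  have hw0 : w ≠ 0 := by rintro rfl; simp at hw
  have hwn : 0 < ‖w‖ := norm_pos_iff.2 hw0
  have := hb (y := w⁻¹) (by
    rw [dist_zero_right, norm_inv]
    rw [inv_lt_comm₀ hwn hδ]
    refine lt_of_lt_of_le ?_ hM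
    rw [inv_eq_one_div]; gcongr; norm_num)
  have f0 : f 0 = 1 := by simp [hf]
  have fw : f w⁻¹ = (w+b)/(w+a) * Complex.exp ((a-b) * (Complex.log (w+1) - Complex.log w)) := by
    rw [log_sub_log' (w' := w+1) (by simpa using mul_self_pos.2 hw)]
    simp only [hf]
    have e1 : (w+1)/w = 1 + w⁻¹ := by field_simp
    have e2 : (1 + b*w⁻¹)/(1+a*w⁻¹) = (w+b)/(w+a) := by
      rw [← mul_div_mul_left _ _ hw0]
      congr 1 <;> field_simp
    rw [e1, e2]
  rw [f0, fw] at this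
  simpa [div_eq_mul_inv] using this

lemma sum_sq_bound {u : ℂ} (h1 : |u.re| ≤ 1) (h2 : 2 ≤ |u.im|) (N : ℕ) :
    ∑ j ∈ Finset.range N, 1 / ‖u + j‖^2 ≤ 18 / |u.im| := by
  set Y := |u.im| with hY
  have step : ∀ j : ℕ, 1 / ‖u + j‖^2 ≤ 9 * (1/((j:ℝ)+Y-1) - 1/((j:ℝ)+1+Y-1)) := by
    intro j
    have hj : (0:ℝ) ≤ j := Nat.cast_nonneg j
    have i1 : Y ≤ ‖u+j‖ := by simpa [hY] using Complex.abs_im_le_norm (u+j)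
    have i2 : (j:ℝ) - 1 ≤ ‖u + j‖ := by
      have := Complex.re_le_norm (u+j)
      simp at this
      linarith [(abs_le.1 h1).1]
    have i3 : ((j:ℝ)+Y)/3 ≤ ‖u+j‖ := by linarith
    calc 1 / ‖u + j‖^2 ≤ 1 / (((j:ℝ)+Y)/3)^2 := by gcongr
      _ = 9 * (1 / ((j:ℝ)+Y)^2) := by field_simp; norm_num
      _ ≤ _ := by
        gcongr
        have : (0:ℝ) < j + Y - 1 := by linarith
        rw [div_sub_div _ _ (by linarith) (by linarith), div_le_div_iff₀ (by positivity) (by nlinarith)]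
        nlinarith
  calc _ ≤ ∑ j ∈ Finset.range N, 9 * (1/((j:ℝ)+Y-1) - 1/((j:ℝ)+1+Y-1)) :=
        Finset.sum_le_sum fun j _ => step j
    _ = 9 * (1/(Y-1) - 1/((N:ℝ)+Y-1)) := by
        rw [← Finset.mul_sum]
        have := Finset.sum_range_sub' (fun j : ℕ => 1/((j:ℝ)+Y-1)) N
        push_cast at this
        rw [this]; simp
    _ ≤ 9 * (1/(Y-1)) := by
        have : 0 ≤ 1/((N:ℝ)+Y-1) := by
          have : (0:ℝ) ≤ N := Nat.cast_nonneg N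
          apply div_nonneg <;> linarith
        linarith
    _ ≤ _ := by
        rw [← mul_div_assoc, div_le_div_iff₀ (by linarith) (by linarith)]
        linarith

lemma Gamma_ne_zero_of_im {w : ℂ} (h : w.im ≠ 0) : Complex.Gamma w ≠ 0 := by
  apply Complex.Gamma_ne_zero
  rintro m rfl
  simp at h

lemma Gamma_ratio (a b : ℂ) : ∃ K Y : ℝ, 0 < K ∧ 0 < Y ∧ ∀ u : ℂ, |u.re| ≤ 1 → Y ≤ |u.im| →
    ‖Complex.Gamma (u+a) / Complex.Gamma (u+b) * Complex.exp (-(a-b) * Complex.log u) - 1‖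
      ≤ K / |u.im| := by
  obtain ⟨K, M, hK, hM, H⟩ := q_bound a b
  refine ⟨36*K, max (max 2 M) (max (18*K) (|a.im|+|b.im|+1)), by positivity, by positivity,
    fun u h1 h2 => ?_⟩
  simp only [max_le_iff] at h2
  obtain ⟨⟨y2, yM⟩, yK, yab⟩ := h2
  have hy : 0 < |u.im| := by linarith
  have him : u.im ≠ 0 := abs_pos.1 hy
  have hu0 : u ≠ 0 := by rintro rfl; simp at him
  have hb0 : (u+b).im ≠ 0 := by
    intro h
    simp at h
    have : |u.im| = |b.im| := by rw [eq_neg_of_add_eq_zero_left h, abs_neg]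
    linarith [abs_nonneg a.im]
  have ha0 : (u+a).im ≠ 0 := by
    intro h
    simp at h
    have : |u.im| = |a.im| := by rw [eq_neg_of_add_eq_zero_left h, abs_neg]
    linarith [abs_nonneg b.im]
  set q : ℂ → ℂ := fun w => (w+b)/(w+a) * Complex.exp ((a-b) * (Complex.log (w+1) - Complex.log w)) with hq
  have hPn : ∀ n : ℕ, ‖∏ j ∈ Finset.range (n+1), q (u+j) - 1‖ ≤ 36 * K / |u.im| := by
    intro n
    have h0 := Finset.norm_prod_one_add_sub_one_le (Finset.range (n+1)) (fun j : ℕ => q (u+j) - 1)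
    simp only [add_sub_cancel] at h0
    refine h0.trans ?_
    have h3 : ∑ j ∈ Finset.range (n+1), ‖q (u+j) - 1‖ ≤ K * (18 / |u.im|) := by
      refine le_trans ?_ (mul_le_mul_of_nonneg_left (sum_sq_bound h1 y2 (n+1)) hK.le)
      rw [Finset.mul_sum]
      refine Finset.sum_le_sum fun j _ => ?_
      have := H (u+j) (by simpa using him) (by
        have := Complex.abs_im_le_norm (u+j)
        simp at this; linarith)
      simpa [hq, div_eq_mul_inv] using this
    have h4 : K * (18 / |u.im|) ≤ 1 := by
      rw [← mul_div_assoc, div_le_one hy]; linarith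
    have h5 : 0 ≤ K * (18 / |u.im|) := by positivity
    have h6 := Real.abs_exp_sub_one_le (x := K * (18 / |u.im|)) (by rwa [abs_of_nonneg h5])
    rw [abs_of_nonneg h5] at h6
    have h7 := (abs_le.1 h6).2
    have h8 := Real.exp_le_exp.2 h3
    have : 2 * (K * (18 / |u.im|)) = 36 * K / |u.im| := by ring
    linarith
  have hlim : Tendsto (fun n : ℕ => ∏ j ∈ Finset.range (n+1), q (u+j)) atTop
      (𝓝 (Complex.Gamma (u+a) / Complex.Gamma (u+b) * Complex.exp (-(a-b) * Complex.log u))) := by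
    have g1 := (Complex.GammaSeq_tendsto_Gamma (u+a)).div (Complex.GammaSeq_tendsto_Gamma (u+b))
      (Gamma_ne_zero_of_im hb0)
    have g2 : Tendsto (fun n : ℕ => Complex.exp ((a-b) * (Complex.log ((u+(n+1))/n) - Complex.log u)))
        atTop (𝓝 (Complex.exp (-(a-b) * Complex.log u))) := by
      have t1 : Tendsto (fun n : ℕ => (u+(n+1))/(n:ℂ)) atTop (𝓝 1) := by
        have t2 : Tendsto (fun n : ℕ => (u+1) * (n:ℂ)⁻¹ + 1) atTop (𝓝 ((u+1)*0+1)) :=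
          (tendsto_inv_atTop_nhds_zero_nat.const_mul _).add_const _
        rw [mul_zero, zero_add] at t2
        refine t2.congr' ?_
        filter_upwards [eventually_ne_atTop 0] with n hn
        have : (n:ℂ) ≠ 0 := by exact_mod_cast hn
        field_simp; ring
      have t3 := t1.clog (by simp)
      rw [Complex.log_one] at t3
      have t4 := (t3.sub_const (Complex.log u)).const_mul (a-b)
      have t5 := (Complex.continuous_exp.tendsto _).comp t4
      rw [show -(a-b) * Complex.log u = (a-b) * (0 - Complex.log u) by ring]
      exact t5
    refine (g1.mul g2).congr' ?_
    filter_upwards [eventually_ge_atTop 1] with n hn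
    have hn0 : (n:ℂ) ≠ 0 := by
      have : n ≠ 0 := by omega
      exact_mod_cast this
    have hlog : ∏ j ∈ Finset.range (n+1), q (u+j) = poch (u+b) (n+1) / poch (u+a) (n+1) *
        Complex.exp ((a-b) * (Complex.log (u+(n+1)) - Complex.log u)) := by
      simp only [hq, Finset.prod_mul_distrib, Finset.prod_div_distrib, poch]
      congr 1
      · congr 1 <;> exact Finset.prod_congr rfl fun j _ => by ring
      · rw [← Complex.exp_sum, ← Finset.mul_sum]
        congr 2
        have := Finset.sum_range_sub (fun j : ℕ => Complex.log (u + j)) (n+1)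
        simp only [Nat.cast_zero, add_zero, Nat.cast_add, Nat.cast_one] at this
        rw [← this]
        refine Finset.sum_congr rfl fun j _ => by rw [add_assoc]
    have hl2 : Complex.log ((u+(n+1))/n) = Complex.log (u+(n+1)) - Complex.log n := by
      have hn1 : (0:ℝ) < (n:ℝ)⁻¹ := by
        have : (0:ℝ) < n := by exact_mod_cast hn
        positivity
      have hx : u+((n:ℂ)+1) ≠ 0 := by
        intro h; have := congrArg Complex.im h; simp at this; exact him this
      have := Complex.log_ofReal_mul hn1 hx
      rw [div_eq_inv_mul]
      push_cast at this
      rw [this, Real.log_inv, Complex.ofReal_neg, ← Complex.natCast_log]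
      ring
    rw [hlog, hl2]
    have p1 := poch_ne_zero_of_im ha0 (n+1)
    have p2 := poch_ne_zero_of_im hb0 (n+1)
    have hf : (n.factorial:ℂ) ≠ 0 := by exact_mod_cast n.factorial_ne_zero
    simp only [Pi.div_apply, GammaSeq_eq_poch]
    rw [Complex.cpow_def_of_ne_zero hn0, Complex.cpow_def_of_ne_zero hn0]
    have E : Complex.exp ((a-b) * (Complex.log (u+(n+1)) - Complex.log u)) *
        Complex.exp (Complex.log n * (u+b)) =
        Complex.exp (Complex.log n * (u+a)) *
        Complex.exp ((a-b) * (Complex.log (u+(n+1)) - Complex.log n - Complex.log u)) := by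
      rw [← Complex.exp_add, ← Complex.exp_add]; congr 1; ring
    have e1 := Complex.exp_ne_zero (Complex.log n * (u+b))
    field_simp
    linear_combination (-1:ℂ) * E
  exact le_of_tendsto ((hlim.sub_const 1).norm) (Eventually.of_forall hPn)

def FF (k₁ k₂ t ρ : ℝ) (u : ℂ) : ℂ :=
  F32 ((k₂ : ℂ) - (k₁ : ℂ) + 1/2 + I * ρ) (3/2 - (k₁ : ℂ) - (k₂ : ℂ) + I * ρ)
      (1/2 - I * t + I * ρ) (1 + 2 * I * ρ) (3/2 - (k₁ : ℂ) + u + I * ρ) 1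

lemma conj_poch (a : ℂ) (n : ℕ) : conj (poch a n) = poch (conj a) n := by
  simp [poch, map_prod]

lemma conj_F32 (a b c d e : ℂ) :
    conj (F32 a b c d e 1) = F32 (conj a) (conj b) (conj c) (conj d) (conj e) 1 := by
  rw [F32_eq, F32_eq, Complex.conj_tsum]
  refine tsum_congr fun n => ?_
  simp only [hT, map_div₀, map_mul, conj_poch, map_one]

lemma conj_FF (k₁ k₂ t ρ : ℝ) (u : ℂ) : conj (FF k₁ k₂ t ρ u) = FF k₁ k₂ (-t) (-ρ) (conj u) := by
  unfold FF
  rw [conj_F32]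
  congr 1 <;>
  · simp [map_ofNat]
    try ring

lemma sin_pi_ne_zero {w : ℂ} (h : w.im ≠ 0) : Complex.sin (Real.pi * w) ≠ 0 := by
  rw [Complex.sin_ne_zero_iff]
  intro k hk
  have hpi : (Real.pi:ℂ) ≠ 0 := by exact_mod_cast Real.pi_ne_zero
  have : w = k := by
    apply mul_left_cancel₀ hpi; rw [hk]; ring
  rw [this] at h; simp at h

lemma PhiC_eq (k₁ k₂ t φ ρ : ℝ) (z : ℂ) (h : t + z.re ≠ 0) :
    PhiC k₁ k₂ t φ ρ z = Complex.exp (((Real.pi:ℂ) - 2*φ) * z) *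
      (Complex.Gamma (1 - k₂ + I*z) / (Complex.Gamma (k₁ - I*t - I*z) * Complex.Gamma (k₁ + I*t + I*z)
        * Complex.Gamma (3/2 - k₁ + I*z + I*ρ))) * FF k₁ k₂ t ρ (I*z) := by
  unfold PhiC pper FF
  have hs := Complex.Gamma_mul_Gamma_one_sub ((k₁:ℂ) - I*t - I*z)
  have him : ((k₁:ℂ) - I*t - I*z).im ≠ 0 := by
    simp; intro h'; apply h; linarith
  have hs0 := sin_pi_ne_zero him
  have hg0 := Gamma_ne_zero_of_im him
  have hpi : (Real.pi:ℂ) ≠ 0 := by exact_mod_cast Real.pi_ne_zero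
  have e1 : (1 - (k₁:ℂ) + I*t + I*z) = 1 - ((k₁:ℂ) - I*t - I*z) := by ring
  have e2 : Complex.exp (((Real.pi:ℂ) - 2*φ) * z) = Complex.exp (-2 * φ * z) * Complex.exp (Real.pi * z) := by
    rw [← Complex.exp_add]; congr 1; ring
  have e3 : (k₁:ℂ) + I*z + I*t = k₁ + I*t + I*z := by ring
  rw [e1, e2, e3]
  have hs' : Complex.sin (Real.pi * ((k₁:ℂ) - I*t - I*z)) * Complex.Gamma (1 - ((k₁:ℂ) - I*t - I*z))
      = Real.pi / Complex.Gamma ((k₁:ℂ) - I*t - I*z) := by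
    rw [eq_div_iff hs0] at hs
    rw [eq_div_iff hg0]
    linear_combination hs
  set F := F32 _ _ _ _ _ _
  calc _ = (Complex.sin (Real.pi * ((k₁:ℂ) - I*t - I*z)) * Complex.Gamma (1 - ((k₁:ℂ) - I*t - I*z)))
        * (1/(Real.pi:ℂ)) * (Complex.exp (-2 * φ * z) * Complex.exp (Real.pi * z)) * Complex.Gamma (1 - k₂ + I*z)
        / (Complex.Gamma (k₁ + I*t + I*z) * Complex.Gamma (3/2 - k₁ + I*z + I*ρ)) * F := by
        ring
    _ = _ := by
        rw [hs']
        by_cases h1 : Complex.Gamma (k₁ + I*t + I*z) = 0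
        · simp [h1]
        by_cases h2 : Complex.Gamma (3/2 - k₁ + I*z + I*ρ) = 0
        · simp [h2]
        field_simp

lemma fstar_PhiC_eq (k₁ k₂ t φ ρ : ℝ) (z : ℂ) (h : t + z.re ≠ 0) :
    fstar (PhiC k₁ k₂ t φ ρ) z = Complex.exp (((Real.pi:ℂ) - 2*φ) * z) *
      (Complex.Gamma (1 - k₂ - I*z) / (Complex.Gamma (k₁ + I*t + I*z) * Complex.Gamma (k₁ - I*t - I*z)
        * Complex.Gamma (3/2 - k₁ - I*z - I*ρ))) * FF k₁ k₂ (-t) (-ρ) (-(I*z)) := by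
  unfold fstar
  rw [PhiC_eq _ _ _ _ _ _ (by simpa using h)]
  simp only [map_mul, map_div₀, conj_FF, ← Complex.Gamma_conj, ← Complex.exp_conj, map_sub, map_add,
    Complex.conj_conj, Complex.conj_ofReal, Complex.conj_I, map_one, map_ofNat]
  congr 1
  · congr 1
    congr 1
    · congr 1; ring
    · congr 1
      · congr 1
        · congr 1; ring
        · congr 1; ring
      · congr 1; ring
  · congr 1; ring

/-- sine quotient -/
def SS (k₁ k₂ t σ : ℝ) (u : ℂ) : ℂ :=
  Complex.sin (Real.pi * (u + (1/2 + k₁ + I*σ))) * Complex.sin (Real.pi * (u + (2 - k₁ + I*t))) /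
    (Complex.sin (Real.pi * (u + (k₂ + 1))) * Complex.sin (Real.pi * (u + (-k₂))))

def GR (k₁ t ρ σ : ℝ) (u : ℂ) : ℂ :=
  Complex.Gamma (u + (1/2 + k₁ + I*σ)) / Complex.Gamma (u + (3/2 - k₁ + I*ρ)) *
    (Complex.Gamma (u + (2 - k₁ + I*t)) / Complex.Gamma (u + (k₁ + I*t)))

def rr (k₁ k₂ ρ σ : ℝ) (u : ℂ) : ℂ :=
  (u + (1 - k₂)) * (u + k₂) / ((u + (3/2 - k₁ + I*ρ)) * (u + (k₁ - 1/2 + I*σ)))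

def Br (k₁ k₂ t ρ σ : ℝ) (u : ℂ) : ℂ :=
  FF k₁ k₂ t ρ u * FF k₁ k₂ (-t) (-σ) (-(u+1)) -
    rr k₁ k₂ ρ σ u * (FF k₁ k₂ t ρ (u+1) * FF k₁ k₂ (-t) (-σ) (-u))

def Cas (k₁ k₂ t φ ρ σ : ℝ) (u : ℂ) : ℂ :=
  -(1/(2*(Real.pi:ℂ))) * Complex.exp (t * (2*φ - Real.pi)) * SS k₁ k₂ t σ u * GR k₁ t ρ σ u *
    Br k₁ k₂ t ρ σ u

lemma refl' {a b : ℂ} (h : a + b = 1) (him : a.im ≠ 0) :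
    Complex.sin (Real.pi * a) = Real.pi / (Complex.Gamma a * Complex.Gamma b) := by
  have hb : b = 1 - a := by linear_combination h
  rw [hb, Complex.Gamma_mul_Gamma_one_sub]
  have hpi : (Real.pi:ℂ) ≠ 0 := by exact_mod_cast Real.pi_ne_zero
  have := sin_pi_ne_zero him
  field_simp

lemma integrand_eq (k₁ k₂ t φ ρ σ : ℝ) (z : ℂ) (h : |t| + |ρ| + |σ| < |z.re|) :
    ((PhiC k₁ k₂ t φ ρ z * fstar (PhiC k₁ k₂ t φ σ) (z - I) -
        PhiC k₁ k₂ t φ ρ (z - I) * fstar (PhiC k₁ k₂ t φ σ) z) *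
      alphaM k₁ k₂ t φ z * wfun k₁ k₂ t φ z) = Cas k₁ k₂ t φ ρ σ (I*z) := by
  have at0 := abs_nonneg t
  have ar0 := abs_nonneg ρ
  have as0 := abs_nonneg σ
  have key : ∀ c : ℝ, |c| ≤ |t| + |ρ| + |σ| → c + z.re ≠ 0 := by
    intro c hc h0
    have : |z.re| = |c| := by rw [eq_neg_of_add_eq_zero_right h0, abs_neg]
    linarith
  have kt : t + z.re ≠ 0 := key t (by linarith)
  have kr : ρ + z.re ≠ 0 := key ρ (by linarith)
  have ks : σ + z.re ≠ 0 := key σ (by linarith)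
  have k0 : z.re ≠ 0 := by simpa using key 0 (by simp; linarith)
  rw [PhiC_eq _ _ _ _ _ _ kt, fstar_PhiC_eq _ _ _ _ _ _ kt,
    PhiC_eq _ _ _ _ _ (z-I) (by simpa using kt), fstar_PhiC_eq _ _ _ _ _ (z-I) (by simpa using kt)]
  have hI : I * (z - I) = I*z + 1 := by rw [mul_sub, Complex.I_mul_I]; ring
  rw [hI]
  unfold alphaM wfun Cas SS GR Br rr
  rw [mul_add I (t:ℂ) z]
  have hu : (I*z).im = z.re := by simp
  set u := I * z with hu'
  have hE : Complex.exp ((2 * z + (t : ℂ)) * (2 * (φ : ℂ) - (Real.pi : ℂ))) *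
      Complex.exp (((Real.pi:ℂ) - 2*φ) * z) * Complex.exp (((Real.pi:ℂ) - 2*φ) * (z - I)) *
      Complex.exp (-2 * I * φ) = -Complex.exp (t * (2*φ - Real.pi)) := by
    rw [← Complex.exp_add, ← Complex.exp_add, ← Complex.exp_add]
    rw [show (2 * z + (t : ℂ)) * (2 * (φ : ℂ) - (Real.pi : ℂ)) + ((Real.pi:ℂ) - 2*φ) * z +
      ((Real.pi:ℂ) - 2*φ) * (z - I) + -2 * I * φ = t * (2*φ - Real.pi) - Real.pi * I by ring]
    rw [Complex.exp_sub, Complex.exp_pi_mul_I]; ring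
  have nz : ∀ (c : ℂ), c.im + z.re ≠ 0 → u + c ≠ 0 := by
    intro c hc h0
    apply hc
    have := congrArg Complex.im h0
    simp [hu] at this; linarith
  -- recurrences
  have g1 : Complex.Gamma (u + (k₂+1)) = (u + k₂) * Complex.Gamma (k₂ + u) := by
    rw [show u + ((k₂:ℂ)+1) = (k₂ + u) + 1 by ring, Complex.Gamma_add_one _ (by
      rw [add_comm]; exact nz _ (by simpa using k0))]; ring
  have g2 : Complex.Gamma (k₁ + I*t + (u+1)) = (u + (k₁ + I*t)) * Complex.Gamma (k₁ + I*t + u) := by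
    rw [show (k₁:ℂ) + I*t + (u+1) = (k₁ + I*t + u) + 1 by ring, Complex.Gamma_add_one _ (by
      rw [add_comm]; exact nz _ (by simpa using kt))]; ring
  have g3 : Complex.Gamma (k₁ - I*t - u) = -(u + (1 - k₁ + I*t)) * Complex.Gamma (k₁ - I*t - (u+1)) := by
    rw [show (k₁:ℂ) - I*t - u = (k₁ - I*t - (u+1)) + 1 by ring, Complex.Gamma_add_one _ (by
      rw [show (k₁:ℂ) - I*t - (u+1) = -(u + (1 - k₁ + I*t)) by ring]
      exact neg_ne_zero.2 (nz _ (by simpa using kt)))]; ring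
  have g4 : Complex.Gamma (1 - k₂ + (u+1)) = (u + (1-k₂)) * Complex.Gamma (1 - k₂ + u) := by
    rw [show 1 - (k₂:ℂ) + (u+1) = (1 - k₂ + u) + 1 by ring, Complex.Gamma_add_one _ (by
      rw [add_comm]; exact nz _ (by simpa using k0))]; ring
  have g5 : Complex.Gamma (1 - k₂ - u) = -(u + k₂) * Complex.Gamma (1 - k₂ - (u+1)) := by
    rw [show 1 - (k₂:ℂ) - u = (1 - k₂ - (u+1)) + 1 by ring, Complex.Gamma_add_one _ (by
      rw [show 1 - (k₂:ℂ) - (u+1) = -(u + k₂) by ring]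
      exact neg_ne_zero.2 (nz _ (by simpa using k0)))]; ring
  have g6 : Complex.Gamma (3/2 - k₁ + (u+1) + I*ρ) = (u + (3/2 - k₁ + I*ρ)) * Complex.Gamma (u + (3/2 - k₁ + I*ρ)) := by
    rw [show 3/2 - (k₁:ℂ) + (u+1) + I*ρ = (u + (3/2 - k₁ + I*ρ)) + 1 by ring, Complex.Gamma_add_one _ (by
      exact nz _ (by simpa using kr))]
  have g7 : Complex.Gamma (3/2 - k₁ - u - I*σ) = -(u + (k₁ - 1/2 + I*σ)) * Complex.Gamma (3/2 - k₁ - (u+1) - I*σ) := by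
    rw [show 3/2 - (k₁:ℂ) - u - I*σ = (3/2 - k₁ - (u+1) - I*σ) + 1 by ring, Complex.Gamma_add_one _ (by
      rw [show 3/2 - (k₁:ℂ) - (u+1) - I*σ = -(u + (k₁ - 1/2 + I*σ)) by ring]
      exact neg_ne_zero.2 (nz _ (by simpa using ks)))]; ring
  have s1 := refl' (a := u + (1/2 + k₁ + I*σ)) (b := 3/2 - k₁ - (u+1) - I*σ) (by ring)
    (by simpa [hu, add_comm] using ks)
  have s2 := refl' (a := u + (2 - k₁ + I*t)) (b := k₁ - I*t - (u+1)) (by ring)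
    (by simpa [hu, add_comm] using kt)
  have s3 := refl' (a := u + (k₂+1)) (b := 1 - k₂ - (u+1)) (by ring)
    (by simpa [hu, add_comm] using k0)
  have s4' := refl' (a := (k₂:ℂ) - u) (b := 1 - k₂ + u) (by ring)
    (by simpa [hu] using k0)
  have s4 : Complex.sin (Real.pi * (u + -(k₂:ℂ))) = -(Real.pi / (Complex.Gamma (k₂ - u) * Complex.Gamma (1 - k₂ + u))) := by
    rw [← s4', ← Complex.sin_neg]; congr 1; ring
  rw [s1, s2, s3, s4, g1, g2, g3, g4, g5, g6, g7]
  have gn : ∀ w : ℂ, w.im ≠ 0 → Complex.Gamma w ≠ 0 := fun w hw => Gamma_ne_zero_of_im hw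
  have hpi : (Real.pi:ℂ) ≠ 0 := by exact_mod_cast Real.pi_ne_zero
  have n1 := gn (u + (1/2 + k₁ + I*σ)) (by simpa [hu, add_comm] using ks)
  have n2 := gn (3/2 - k₁ - (u+1) - I*σ) (by simp [hu]; intro h; apply ks; linarith)
  have n3 := gn (u + (2 - k₁ + I*t)) (by simpa [hu, add_comm] using kt)
  have n4 := gn (k₁ - I*t - (u+1)) (by simp [hu]; intro h; apply kt; linarith)
  have n5 := gn (k₂ + u) (by simpa [hu] using k0)
  have n6 := gn (k₂ - u) (by simpa [hu] using k0)
  have n7 := gn (1 - k₂ + u) (by simpa [hu] using k0)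
  have n8 := gn (1 - k₂ - (u+1)) (by simpa [hu] using k0)
  have n9 := gn (k₁ + I*t + u) (by simpa [hu] using kt)
  have n10 := gn (u + (3/2 - k₁ + I*ρ)) (by simpa [hu, add_comm] using kr)
  have m1 := nz (k₁ + I*t) (by simpa using kt)
  have m2 := nz (1 - k₁ + I*t) (by simpa using kt)
  have m3 := nz k₂ (by simpa using k0)
  have m4 := nz (1 - k₂) (by simpa using k0)
  have m5 := nz (3/2 - k₁ + I*ρ) (by simpa using kr)
  have m6 := nz (k₁ - 1/2 + I*σ) (by simpa using ks)
  have e1 : (3/2 - (k₁:ℂ) + u + I*ρ) = u + (3/2 - k₁ + I*ρ) := by ring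
  have e2 : (u + ((k₁:ℂ) + I*t)) = k₁ + I*t + u := by ring
  have e3 : (k₂:ℂ) + u = u + k₂ := by ring
  have e4 : (k₁:ℂ) + (I*t + u) = k₁ + I*t + u := by ring
  rw [e2] at m1
  rw [e3] at n5
  rw [e1, e2, e3, e4]
  rw [show Complex.exp (t * (2*φ - Real.pi)) = -(Complex.exp ((2 * z + (t : ℂ)) * (2 * (φ : ℂ) - (Real.pi : ℂ))) *
      Complex.exp (((Real.pi:ℂ) - 2*φ) * z) * Complex.exp (((Real.pi:ℂ) - 2*φ) * (z - I)) *
      Complex.exp (-2 * I * φ)) by rw [hE, neg_neg]]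
  generalize Complex.exp ((2 * z + (t : ℂ)) * (2 * (φ : ℂ) - (Real.pi : ℂ))) = E1
  generalize Complex.exp (((Real.pi:ℂ) - 2*φ) * z) = E2
  generalize Complex.exp (((Real.pi:ℂ) - 2*φ) * (z - I)) = E3
  generalize Complex.exp (-2 * I * φ) = E4
  generalize FF k₁ k₂ t ρ u = F1
  generalize FF k₁ k₂ (-t) (-σ) (-(u+1)) = F2
  generalize FF k₁ k₂ t ρ (u+1) = F3
  generalize FF k₁ k₂ (-t) (-σ) (-u) = F4
  generalize Complex.Gamma (u + (1/2 + k₁ + I*σ)) = G1 at *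
  generalize Complex.Gamma (3/2 - k₁ - (u+1) - I*σ) = G2 at *
  generalize Complex.Gamma (u + (2 - k₁ + I*t)) = G3 at *
  generalize Complex.Gamma (k₁ - I*t - (u+1)) = G4 at *
  generalize Complex.Gamma (u + k₂) = G5 at *
  generalize Complex.Gamma (k₂ - u) = G6 at *
  generalize Complex.Gamma (1 - k₂ + u) = G7 at *
  generalize Complex.Gamma (1 - k₂ - (u+1)) = G8 at *
  generalize Complex.Gamma (k₁ + I*t + u) = G9 at *
  generalize Complex.Gamma (u + (3/2 - k₁ + I*ρ)) = G10 at *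
  clear_value u
  clear s1 s2 s3 s4 s4' g1 g2 g3 g4 g5 g6 g7 hE
  push_cast
  generalize (u + (1 - (k₁:ℂ) + I*t)) = c2 at *
  generalize (u + (3/2 - (k₁:ℂ) + I*ρ)) = c5 at *
  generalize (u + ((k₁:ℂ) - 1/2 + I*σ)) = c6 at *
  generalize (u + (1 - (k₂:ℂ))) = c4 at *
  generalize (u + (k₂:ℂ)) = c3 at *
  generalize ((k₁:ℂ) + I*t+u) = c1 at *
  field_simp
  ring

def LF (ε : ℝ) : Filter ℂ := comap (fun u : ℂ => ε * u.im) atTop ⊓ 𝓟 {u | -1 ≤ u.re ∧ u.re ≤ 0}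

lemma LF_ev (ε : ℝ) (N : ℝ) : ∀ᶠ u in LF ε, (-1 ≤ u.re ∧ u.re ≤ 0) ∧ N ≤ ε * u.im := by
  have h1 : ∀ᶠ u in LF ε, N ≤ ε * u.im :=
    (tendsto_comap.eventually (eventually_ge_atTop N)).filter_mono inf_le_left
  have h2 : ∀ᶠ u in LF ε, u ∈ {u : ℂ | -1 ≤ u.re ∧ u.re ≤ 0} :=
    (eventually_principal.2 fun u hu => hu : ∀ᶠ u in 𝓟 {u : ℂ | -1 ≤ u.re ∧ u.re ≤ 0}, _).filter_mono inf_le_right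
  filter_upwards [h1, h2] with u a b using ⟨b, a⟩

lemma LF_ex {ε : ℝ} {p : ℂ → Prop} (h : ∀ᶠ u in LF ε, p u) :
    ∃ N : ℝ, ∀ u : ℂ, -1 ≤ u.re → u.re ≤ 0 → N ≤ ε * u.im → p u := by
  unfold LF at h
  rw [eventually_inf_principal, eventually_comap] at h
  obtain ⟨N, hN⟩ := eventually_atTop.1 h
  exact ⟨N, fun u h1 h2 h3 => hN _ h3 u rfl ⟨h1, h2⟩⟩

lemma eps_abs {ε : ℝ} (hε : ε = 1 ∨ ε = -1) {y : ℝ} (h : 0 ≤ ε * y) : |y| = ε * y := by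
  rcases hε with rfl | rfl
  · simp at h ⊢; exact h
  · simp at h ⊢; exact h

lemma LF_O {ε : ℝ} (hε : ε = 1 ∨ ε = -1) {f : ℂ → ℂ} (n : ℕ) {K Y : ℝ}
    (h : ∀ u : ℂ, -1 ≤ u.re → u.re ≤ 0 → Y ≤ |u.im| → ‖f u‖ ≤ K / |u.im|^n) :
    f =O[LF ε] fun u => (u⁻¹)^n := by
  refine IsBigO.of_bound (|K| * 2^n) ?_
  filter_upwards [LF_ev ε (max Y 1)] with u ⟨⟨h1, h2⟩, h3⟩
  have h3' := h3
  rw [max_le_iff] at h3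
  rw [← eps_abs hε (by linarith [h3.2])] at h3
  refine (h u h1 h2 h3.1).trans ?_
  have hy : 0 < |u.im| := by linarith
  have hn : ‖u‖ ≤ 2 * |u.im| := by
    have := Complex.norm_le_abs_re_add_abs_im u
    have : |u.re| ≤ 1 := abs_le.2 ⟨h1, by linarith⟩
    linarith
  have hu : 0 < ‖u‖ := lt_of_lt_of_le hy (Complex.abs_im_le_norm u)
  rw [norm_pow, norm_inv]
  calc K / |u.im|^n ≤ |K| / |u.im|^n := by gcongr; exact le_abs_self K
    _ = |K| * 2^n * ((2*|u.im|)⁻¹)^n := by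
        rw [inv_pow, mul_pow]; field_simp
    _ ≤ |K| * 2^n * (‖u‖⁻¹)^n := by gcongr

lemma LF_inv_tendsto {ε : ℝ} (hε : ε = 1 ∨ ε = -1) : Tendsto (fun u : ℂ => u⁻¹) (LF ε) (𝓝 0) := by
  rw [Metric.tendsto_nhds]
  intro δ hδ
  filter_upwards [LF_ev ε (2/δ)] with u ⟨_, h3⟩
  have h0 : 0 < 2/δ := by positivity
  rw [← eps_abs hε (by linarith)] at h3
  have := Complex.abs_im_le_norm u
  rw [dist_zero_right, norm_inv]
  have hu : 0 < ‖u‖ := by linarith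
  rw [inv_lt_comm₀ hu hδ]
  refine lt_of_lt_of_le ?_ (h3.trans this)
  rw [inv_eq_one_div]; gcongr; norm_num

def E0 (ε : ℝ) (f : ℂ → ℂ) : Prop := (fun u => f u - 1) =O[LF ε] fun u => u⁻¹
def E1 (ε : ℝ) (f : ℂ → ℂ) (a : ℂ) : Prop := (fun u => f u - 1 - a * u⁻¹) =O[LF ε] fun u => (u⁻¹)^2

section
variable {ε : ℝ} (hε : ε = 1 ∨ ε = -1)

lemma LF_inv_O1 (hε : ε = 1 ∨ ε = -1) : (fun u : ℂ => u⁻¹) =O[LF ε] fun _ => (1:ℂ) :=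
  (LF_inv_tendsto hε).isBigO_one ℂ

lemma LF_sq_O (hε : ε = 1 ∨ ε = -1) : (fun u : ℂ => (u⁻¹)^2) =O[LF ε] fun u => u⁻¹ := by
  have := (LF_inv_O1 hε).mul (isBigO_refl (fun u : ℂ => u⁻¹) (LF ε))
  simpa [sq] using this

lemma E0.tendsto (hε : ε = 1 ∨ ε = -1) {f : ℂ → ℂ} (hf : E0 ε f) : Tendsto f (LF ε) (𝓝 1) := by
  have := hf.trans_tendsto (LF_inv_tendsto hε)
  simpa using this.add_const 1

lemma E0.mul (hε : ε = 1 ∨ ε = -1) {f g : ℂ → ℂ} (hf : E0 ε f) (hg : E0 ε g) :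
    E0 ε (fun u => f u * g u) := by
  unfold E0
  have h1 := ((hf.tendsto hε).isBigO_one ℂ).mul hg
  simp only [one_mul] at h1
  refine (h1.add hf).congr_left fun u => by ring

lemma E0.inv (hε : ε = 1 ∨ ε = -1) {f : ℂ → ℂ} (hf : E0 ε f) : E0 ε (fun u => (f u)⁻¹) := by
  unfold E0
  have h1 := (((hf.tendsto hε).inv₀ one_ne_zero).isBigO_one ℂ).mul hf.neg_left
  simp only [one_mul] at h1
  refine h1.congr' ?_ EventuallyEq.rfl
  filter_upwards [(hf.tendsto hε).eventually_ne one_ne_zero] with u hu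
  field_simp
  ring

lemma E1.bound (hε : ε = 1 ∨ ε = -1) {f : ℂ → ℂ} {a : ℂ} (hf : E1 ε f a) : E0 ε f := by
  unfold E0
  have h1 := (hf.trans (LF_sq_O hε)).add ((isBigO_refl (fun u : ℂ => u⁻¹) (LF ε)).const_mul_left a)
  refine h1.congr_left fun u => by ring

lemma E1.mul (hε : ε = 1 ∨ ε = -1) {f g : ℂ → ℂ} {a b : ℂ} (hf : E1 ε f a) (hg : E1 ε g b) :
    E1 ε (fun u => f u * g u) (a + b) := by
  unfold E1
  have h1 := (((hf.bound hε).tendsto hε).isBigO_one ℂ).mul hg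
  simp only [one_mul] at h1
  have h2 := IsBigO.mul (show (fun u => f u - 1) =O[LF ε] fun u => u⁻¹ from hf.bound hε) ((isBigO_refl (fun u : ℂ => u⁻¹) (LF ε)).const_mul_left b)
  simp only [← sq] at h2
  refine ((h1.add hf).add h2).congr_left fun u => by ring

lemma E1_lin (hε : ε = 1 ∨ ε = -1) (p : ℂ) : E1 ε (fun u => (u + p) * u⁻¹) p := by
  unfold E1
  refine (isBigO_zero _ _).congr' ?_ EventuallyEq.rfl
  filter_upwards [LF_ev ε 1] with u ⟨_, h⟩
  have : u ≠ 0 := by rintro rfl; simp at h; linarith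
  field_simp; ring

lemma E1.inv (hε : ε = 1 ∨ ε = -1) {f : ℂ → ℂ} {a : ℂ} (hf : E1 ε f a) :
    E1 ε (fun u => (f u)⁻¹) (-a) := by
  unfold E1
  have hb := hf.bound hε
  have h1 := (((hb.tendsto hε).inv₀ one_ne_zero).isBigO_one ℂ).mul
    (hf.neg_left.add (IsBigO.mul (show (fun u => f u - 1) =O[LF ε] fun u => u⁻¹ from hb) ((isBigO_refl (fun u : ℂ => u⁻¹) (LF ε)).const_mul_left a) |>.congr_right
      (fun u => (sq _).symm)))
  simp only [one_mul] at h1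
  refine h1.congr' ?_ EventuallyEq.rfl
  filter_upwards [(hb.tendsto hε).eventually_ne one_ne_zero] with u hu
  field_simp
  ring

lemma E1_rr (hε : ε = 1 ∨ ε = -1) (k₁ k₂ ρ σ : ℝ) : E1 ε (rr k₁ k₂ ρ σ) (-I*(ρ+σ)) := by
  have h := ((E1_lin hε (1-k₂)).mul hε (E1_lin hε k₂)).mul hε
    (((E1_lin hε (3/2 - k₁ + I*ρ)).mul hε (E1_lin hε (k₁ - 1/2 + I*σ))).inv hε)
  have e : (1 - (k₂:ℂ) + k₂ + -(3/2 - k₁ + I*ρ + (k₁ - 1/2 + I*σ))) = -I*(ρ+σ) := by ring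
  rw [e] at h
  refine h.congr' ?_ EventuallyEq.rfl
  filter_upwards [LF_ev ε 1] with u ⟨_, h⟩
  have : u ≠ 0 := by rintro rfl; simp at h; linarith
  congr 2
  unfold rr
  generalize (3/2 - (k₁:ℂ) + I*ρ) = x
  generalize ((k₁:ℂ) - 1/2 + I*σ) = y
  generalize (1 - (k₂:ℂ)) = z
  simp only [mul_inv, inv_inv, div_eq_mul_inv]
  field_simp

lemma E1_F32 (hε : ε = 1 ∨ ε = -1) (A B C D c : ℂ) (η : ℝ) (hη : η = 1 ∨ η = -1) (r : ℝ)
    (h : (A+B+C-D).re < r) (hr : ∀ x : ℝ, -1 ≤ x → x ≤ 0 → r ≤ η * x + c.re) :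
    E1 ε (fun u => F32 A B C D (η * u + c) 1) (η * (A*B*C/D)) := by
  obtain ⟨K, hK, H⟩ := F32_asymp A B C D r h
  refine LF_O hε 2 (K := 4*K + 2*‖A*B*C/D‖*‖c‖) (Y := 2*|c.im| + 2*(|r|+1)) fun u h1 h2 h3 => ?_
  have hη1 : |η| = 1 := by rcases hη with rfl | rfl <;> simp
  have hηη : (η:ℂ) * η = 1 := by rcases hη with rfl | rfl <;> simp
  have r0 := abs_nonneg r
  have c0 := abs_nonneg c.im
  have him : ((η:ℂ) * u + c).im = η * u.im + c.im := by simp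
  have hre : ((η:ℂ) * u + c).re = η * u.re + c.re := by simp
  have hle : |u.im|/2 ≤ |((η:ℂ) * u + c).im| := by
    rw [him]
    have : |η * u.im| ≤ |η * u.im + c.im| + |c.im| := by
      have := abs_sub (η * u.im + c.im) c.im
      simpa using this
    rw [abs_mul, hη1, one_mul] at this
    linarith
  have hy : 0 < |u.im| := by linarith
  have hH := H ((η:ℂ) * u + c) (by rw [hre]; exact hr _ h1 h2) (by linarith)
  set e := (η:ℂ) * u + c with he
  have hen : |u.im|/2 ≤ ‖e‖ := hle.trans (Complex.abs_im_le_norm e)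
  have hun : |u.im| ≤ ‖u‖ := Complex.abs_im_le_norm u
  have e0 : e ≠ 0 := norm_pos_iff.1 (by linarith)
  have u0 : u ≠ 0 := norm_pos_iff.1 (by linarith)
  have split : F32 A B C D e 1 - 1 - η * (A*B*C/D) * u⁻¹ =
      (F32 A B C D e 1 - 1 - (A*B*C/D)/e) - η * ((A*B*C/D) * c) / (e * u) := by
    have : (A*B*C/D)/e - η * (A*B*C/D) * u⁻¹ = - (η * ((A*B*C/D) * c) / (e * u)) := by
      generalize A*B*C/D = Q
      field_simp
      rw [he]; linear_combination (-(Q*u)) * hηη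
    linear_combination this
  rw [split]
  refine (norm_sub_le _ _).trans ?_
  have b1 : K / |e.im|^2 ≤ 4*K/|u.im|^2 := by
    calc K / |e.im|^2 ≤ K / (|u.im|/2)^2 := by gcongr
      _ = _ := by field_simp; norm_num
  have b2 : ‖(η:ℂ) * ((A*B*C/D) * c) / (e * u)‖ ≤ 2*‖A*B*C/D‖*‖c‖/|u.im|^2 := by
    rw [norm_div, norm_mul (η:ℂ), norm_mul e, norm_mul _ c, Complex.norm_real, Real.norm_eq_abs, hη1, one_mul]
    calc _ ≤ ‖A*B*C/D‖*‖c‖ / (|u.im|/2 * |u.im|) := by gcongr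
      _ = _ := by field_simp
  rw [add_div]
  linarith

lemma E1_FF (hε : ε = 1 ∨ ε = -1) (k₁ k₂ t ρ : ℝ) (hk₁ : 1 < k₁) : ∃ a : ℂ,
    E1 ε (fun u => FF k₁ k₂ t ρ u) a ∧ E1 ε (fun u => FF k₁ k₂ t ρ (u+1)) a ∧
    E1 ε (fun u => FF k₁ k₂ t ρ (-u)) (-a) ∧ E1 ε (fun u => FF k₁ k₂ t ρ (-(u+1))) (-a) := by
  set A : ℂ := (k₂ : ℂ) - (k₁ : ℂ) + 1/2 + I * ρ with hA
  set B : ℂ := 3/2 - (k₁ : ℂ) - (k₂ : ℂ) + I * ρ with hB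
  set C : ℂ := 1/2 - I * t + I * ρ with hC
  set D : ℂ := 1 + 2 * I * ρ with hD
  have hre : (A+B+C-D).re < 1/2 - k₁ := by
    simp [hA, hB, hC, hD]; norm_num; linarith
  refine ⟨A*B*C/D, ?_, ?_, ?_, ?_⟩
  · have := E1_F32 hε A B C D (3/2 - k₁ + I*ρ) 1 (Or.inl rfl) (1/2-k₁) hre (by
      intro x h1 h2; simp; norm_num; linarith)
    simp only [Complex.ofReal_one, one_mul] at this
    convert this using 4
    unfold FF; congr 1; ring
  · have := E1_F32 hε A B C D (3/2 - k₁ + 1 + I*ρ) 1 (Or.inl rfl) (1/2-k₁) hre (by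
      intro x h1 h2; simp; norm_num; linarith)
    simp only [Complex.ofReal_one, one_mul] at this
    convert this using 4
    unfold FF; congr 1; ring
  · have := E1_F32 hε A B C D (3/2 - k₁ + I*ρ) (-1) (Or.inr rfl) (1/2-k₁) hre (by
      intro x h1 h2; simp; norm_num; linarith)
    simp only [Complex.ofReal_neg, Complex.ofReal_one, neg_mul, one_mul] at this
    convert this using 4
    unfold FF; congr 1; ring
  · have := E1_F32 hε A B C D (3/2 - k₁ - 1 + I*ρ) (-1) (Or.inr rfl) (1/2-k₁) hre (by
      intro x h1 h2; simp; norm_num; linarith)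
    simp only [Complex.ofReal_neg, Complex.ofReal_one, neg_mul, one_mul] at this
    convert this using 4
    unfold FF; congr 1; ring

lemma Br_asymp (hε : ε = 1 ∨ ε = -1) (k₁ k₂ t ρ σ : ℝ) (hk₁ : 1 < k₁) :
    (fun u => u * Br k₁ k₂ t ρ σ u - I*(ρ+σ)) =O[LF ε] fun u => u⁻¹ := by
  obtain ⟨a, a1, a2, -, -⟩ := E1_FF hε k₁ k₂ t ρ hk₁
  obtain ⟨b, -, -, b1, b2⟩ := E1_FF hε k₁ k₂ (-t) (-σ) hk₁
  have h1 := a1.mul hε b2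
  have h2 := (E1_rr hε k₁ k₂ ρ σ).mul hε (a2.mul hε b1)
  have h3 : (fun u => Br k₁ k₂ t ρ σ u - I*(ρ+σ)*u⁻¹) =O[LF ε] fun u => (u⁻¹)^2 := by
    refine (h1.sub h2).congr_left fun u => ?_
    unfold Br; ring
  have h4 := (isBigO_refl (fun u : ℂ => u) (LF ε)).mul h3
  refine h4.congr' ?_ ?_
  · filter_upwards [LF_ev ε 1] with u ⟨_, h⟩
    have : u ≠ 0 := by rintro rfl; simp at h; linarith
    field_simp
  · filter_upwards [LF_ev ε 1] with u ⟨_, h⟩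
    have : u ≠ 0 := by rintro rfl; simp at h; linarith
    field_simp

lemma E0_exp (hε : ε = 1 ∨ ε = -1) (a : ℂ) :
    E0 ε (fun u => 1 - Complex.exp (2*I*ε*(Real.pi*(u+a)))) := by
  have h : (fun u => -Complex.exp (2*I*ε*(Real.pi*(u+a)))) =O[LF ε] fun u => (u⁻¹)^1 := by
    refine IsBigO.trans (g := fun u : ℂ => Complex.exp (2*I*ε*(Real.pi*(u)))) ?_ ?_
    · refine IsBigO.of_bound ‖Complex.exp (2*I*ε*(Real.pi*a))‖ (Eventually.of_forall fun u => ?_)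
      rw [norm_neg, ← norm_mul, ← Complex.exp_add]
      apply le_of_eq; congr 2; ring
    · have hb : (fun u : ℂ => Complex.exp (2*I*ε*(Real.pi*u))) =O[LF ε] fun u => (u.im:ℂ)⁻¹ := by
        refine IsBigO.of_bound 1 ?_
        filter_upwards [LF_ev ε 1] with u ⟨_, h⟩
        rw [Complex.norm_exp, norm_inv, Complex.norm_real, Real.norm_eq_abs, eps_abs hε (by linarith)]
        have : (2*I*ε*(Real.pi*u)).re = -(2*Real.pi*(ε*u.im)) := by simp; ring
        rw [this, Real.exp_neg, one_mul]
        have h1 : ε*u.im ≤ Real.exp (2*Real.pi*(ε*u.im)) := by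
          have := Real.add_one_le_exp (2*Real.pi*(ε*u.im))
          nlinarith [Real.pi_gt_three]
        gcongr
      refine hb.trans (LF_O hε 1 (K := 1) (Y := 1) fun u _ _ _ => ?_)
      simp
  unfold E0
  simp only [pow_one] at h
  exact h.congr_left fun u => by ring

lemma sin_eps (hε : ε = 1 ∨ ε = -1) (w : ℂ) :
    Complex.sin w = (ε*I/2) * Complex.exp (-I*ε*w) * (1 - Complex.exp (2*I*ε*w)) := by
  have key : Complex.exp (-I*ε*w) * Complex.exp (2*I*ε*w) = Complex.exp (I*ε*w) := by
    rw [← Complex.exp_add]; congr 1; ring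
  rw [mul_sub, mul_assoc _ (Complex.exp _) (Complex.exp _), key, Complex.sin]
  rcases hε with rfl | rfl
  · simp; ring_nf
  · simp; ring_nf

lemma SS_asymp (hε : ε = 1 ∨ ε = -1) (k₁ k₂ t σ : ℝ) : ∃ g : ℂ → ℂ, E0 ε g ∧
    ∀ u, SS k₁ k₂ t σ u = ε * I * Complex.exp ((ε*Real.pi*(σ+t) : ℝ)) * g u := by
  refine ⟨_, ((E0_exp hε (1/2 + k₁ + I*σ)).mul hε (E0_exp hε (2 - k₁ + I*t))).mul hε
    (((E0_exp hε (k₂+1)).mul hε (E0_exp hε (-k₂))).inv hε), fun u => ?_⟩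
  unfold SS
  simp only [sin_eps hε]
  have hc : (ε*I/2 : ℂ) ≠ 0 := by
    rcases hε with rfl | rfl <;> simp
  have key : Complex.exp (-I*ε*(Real.pi * (u + (1/2 + k₁ + I*σ)))) *
      Complex.exp (-I*ε*(Real.pi * (u + (2 - k₁ + I*t)))) =
      ε * I * Complex.exp ((ε*Real.pi*(σ+t) : ℝ)) * (Complex.exp (-I*ε*(Real.pi * (u + (k₂+1)))) *
      Complex.exp (-I*ε*(Real.pi * (u + (-k₂))))) := by
    have : (ε:ℂ) * I = Complex.exp (-I*ε*(3/2*Real.pi)) := by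
      have h3 : Complex.exp (-I*(3/2*Real.pi)) = I := by
        rw [show -I*(3/2*(Real.pi:ℂ)) = Real.pi/2*I - 2*Real.pi*I by ring, Complex.exp_sub,
          Complex.exp_two_pi_mul_I, div_one, Complex.exp_pi_div_two_mul_I]
      rcases hε with rfl | rfl
      · simp only [Complex.ofReal_one, one_mul, mul_one]; exact h3.symm
      · rw [show -I*((-1:ℝ):ℂ)*(3/2*(Real.pi:ℂ)) = -(-I*(3/2*Real.pi)) by push_cast; ring,
          Complex.exp_neg, h3]; simp
    rw [this, ← Complex.exp_add, ← Complex.exp_add, ← Complex.exp_add, ← Complex.exp_add]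
    congr 1
    push_cast
    linear_combination (-(ε:ℂ)*Real.pi*(σ+t)) * Complex.I_sq
  generalize Complex.exp (-I*ε*(Real.pi * (u + (1/2 + k₁ + I*σ)))) = x1 at *
  generalize Complex.exp (-I*ε*(Real.pi * (u + (2 - k₁ + I*t)))) = x2 at *
  have n3 := Complex.exp_ne_zero (-I*ε*(Real.pi * (u + (k₂+1))))
  have n4 := Complex.exp_ne_zero (-I*ε*(Real.pi * (u + (-k₂))))
  generalize Complex.exp (-I*ε*(Real.pi * (u + (k₂+1)))) = x3 at *
  generalize Complex.exp (-I*ε*(Real.pi * (u + (-k₂)))) = x4 at *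
  generalize 1 - Complex.exp (2*I*ε*(Real.pi*(u + (1/2 + k₁ + I*σ)))) = y1 at *
  generalize 1 - Complex.exp (2*I*ε*(Real.pi*(u + (2 - k₁ + I*t)))) = y2 at *
  generalize 1 - Complex.exp (2*I*ε*(Real.pi*(u + (k₂+1)))) = y3 at *
  generalize 1 - Complex.exp (2*I*ε*(Real.pi*(u + (-k₂)))) = y4 at *
  generalize (ε*I/2 : ℂ) = c at *
  calc _ = (c*c) * (x1 * x2) * (y1*y2) / ((c*c)*(x3*x4)*(y3*y4)) := by ring
    _ = _ := by
      rw [key, mul_assoc (c*c), mul_assoc (c*c), mul_div_mul_left _ _ (mul_ne_zero hc hc)]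
      rw [show ∀ a b c : ℂ, a * b * c = b * (a * c) by intros; ring, mul_div_mul_left _ _ (mul_ne_zero n3 n4)]
      rw [mul_div_assoc, div_eq_mul_inv]

lemma E0_Gamma (hε : ε = 1 ∨ ε = -1) (a b : ℂ) :
    E0 ε (fun u => Complex.Gamma (u+a) / Complex.Gamma (u+b) * Complex.exp (-(a-b) * Complex.log u)) := by
  obtain ⟨K, Y, _, _, H⟩ := Gamma_ratio a b
  have := LF_O hε 1 (f := fun u => Complex.Gamma (u+a) / Complex.Gamma (u+b) * Complex.exp (-(a-b) * Complex.log u) - 1)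
    (K := K) (Y := Y) (fun u h1 h2 h3 => by
      rw [pow_one]; exact H u (abs_le.2 ⟨h1, by linarith⟩) h3)
  simpa [E0] using this

lemma E0_log (hε : ε = 1 ∨ ε = -1) (κ : ℂ) :
    E0 ε (fun u => Complex.exp (κ * (Complex.log u - Complex.log (I * u.im)))) := by
  have := LF_O hε 1 (f := fun u => Complex.exp (κ * (Complex.log u - Complex.log (I * u.im))) - 1)
    (K := 3*‖κ‖) (Y := 2 + 2*‖κ‖) (fun u h1 h2 h3 => by
      have k0 := norm_nonneg κ
      have hy : 0 < |u.im| := by linarith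
      have him : u.im ≠ 0 := abs_pos.1 hy
      rw [log_sub_log' (by simpa using mul_self_pos.2 him)]
      have hd : u / (I * u.im) = 1 + u.re / (I * u.im) := by
        have : (u.im:ℂ) ≠ 0 := by exact_mod_cast him
        have hI := Complex.I_ne_zero
        rw [eq_comm, ← div_self (mul_ne_zero hI this), ← add_div]
        congr 1
        rw [add_comm, mul_comm I]; exact Complex.re_add_im u
      rw [hd]
      have hh : ‖(u.re:ℂ) / (I * u.im)‖ ≤ 1 / |u.im| := by
        rw [norm_div, norm_mul, Complex.norm_I, one_mul, Complex.norm_real, Complex.norm_real,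
          Real.norm_eq_abs, Real.norm_eq_abs]
        gcongr
        exact abs_le.2 ⟨h1, by linarith⟩
      have h4 : 1 / |u.im| ≤ 1/2 := by gcongr; linarith
      have h5 := Complex.norm_log_one_add_half_le_self (hh.trans h4)
      have h6 : ‖κ * Complex.log (1 + u.re / (I * u.im))‖ ≤ ‖κ‖ * (3/2 * (1/|u.im|)) := by
        rw [norm_mul]; gcongr; exact h5.trans (by gcongr)
      have h7 : ‖κ‖ * (3/2 * (1/|u.im|)) ≤ 1 := by
        rw [show ‖κ‖ * (3/2 * (1/|u.im|)) = (3/2*‖κ‖)/|u.im| by ring, div_le_one hy]; linarith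
      refine (Complex.norm_exp_sub_one_le (h6.trans h7)).trans ?_
      rw [pow_one]
      calc _ ≤ 2 * (‖κ‖ * (3/2 * (1/|u.im|))) := by gcongr
        _ = _ := by ring)
  simpa [E0] using this
end

section
variable {ε : ℝ}

lemma exp_log_im (hε : ε = 1 ∨ ε = -1) (τ y : ℝ) (hy : 0 < ε * y) :
    Complex.exp ((I*τ) * Complex.log (I * y)) =
      ((|y| : ℝ) : ℂ) ^ (I * (τ:ℂ)) * Complex.exp ((-(ε * (Real.pi/2) * τ) : ℝ)) := by
  have hy0 : 0 < |y| := by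
    rw [eps_abs hε hy.le]; exact hy
  have hc : ((|y| : ℝ) : ℂ) ≠ 0 := by exact_mod_cast hy0.ne'
  have h1 : I * (y:ℂ) = ((|y|:ℝ):ℂ) * (ε * I) := by
    rw [eps_abs hε hy.le]
    rcases hε with rfl | rfl <;> push_cast <;> ring
  have h2 : Complex.log (ε * I) = ε * (Real.pi/2) * I := by
    rcases hε with rfl | rfl
    · simp [Complex.log_I]
    · simp [Complex.log_neg_I]
  have h3 : (ε:ℂ) * I ≠ 0 := by rcases hε with rfl | rfl <;> simp
  rw [h1, Complex.log_ofReal_mul hy0 h3, h2, Complex.cpow_def_of_ne_zero hc, ← Complex.exp_add,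
    Complex.ofReal_log hy0.le]
  congr 1
  push_cast
  linear_combination (τ * ε * (Real.pi/2) : ℂ) * Complex.I_sq

lemma norm_cpow_I (y τ : ℝ) (hy : y ≠ 0) : ‖((|y| : ℝ) : ℂ) ^ (I * (τ:ℂ))‖ = 1 := by
  rw [Complex.norm_cpow_eq_rpow_re_of_pos (abs_pos.2 hy)]; simp

lemma Cas_asymp (hε : ε = 1 ∨ ε = -1) (k₁ k₂ t φ ρ σ : ℝ) (hk₁ : 1 < k₁) :
    (fun u => I * Cas k₁ k₂ t φ ρ σ u -
      ε * Dpm t φ ε ρ σ * ((ρ:ℂ)+σ) * ((|u.im| : ℝ) : ℂ) ^ (I * ((σ:ℂ)-ρ))) =O[LF ε] fun u => u⁻¹ := by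
  obtain ⟨g, hg, hS⟩ := SS_asymp hε k₁ k₂ t σ
  have h1 := E0_Gamma hε (1/2 + k₁ + I*σ) (3/2 - k₁ + I*ρ)
  have h2 := E0_Gamma hε (2 - k₁ + I*t) (k₁ + I*t)
  have h3 := E0_log hε (I * ((σ - ρ : ℝ):ℂ))
  have hP := ((hg.mul hε h1).mul hε h2).mul hε h3
  generalize hPd : (fun u : ℂ => g u * (Complex.Gamma (u + (1/2 + k₁ + I*σ)) / Complex.Gamma (u + (3/2 - k₁ + I*ρ)) *
     Complex.exp (-(1/2 + k₁ + I*σ - (3/2 - k₁ + I*ρ)) * Complex.log u)) *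
     (Complex.Gamma (u + (2 - k₁ + I*t)) / Complex.Gamma (u + (k₁ + I*t)) *
     Complex.exp (-(2 - k₁ + I*t - (k₁ + I*t)) * Complex.log u)) *
     Complex.exp (I * ((σ - ρ : ℝ):ℂ) * (Complex.log u - Complex.log (I * u.im)))) = P at hP
  have hB := Br_asymp hε k₁ k₂ t ρ σ hk₁
  have key : ∀ᶠ u in LF ε, I * Cas k₁ k₂ t φ ρ σ u = ε * Dpm t φ ε ρ σ * ((|u.im| : ℝ) : ℂ) ^ (I * ((σ:ℂ)-ρ)) *
      (P u * (-I * (u * Br k₁ k₂ t ρ σ u))) := by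
    filter_upwards [LF_ev ε 1] with u ⟨_, h⟩
    have hu : u ≠ 0 := by rintro rfl; simp at h; linarith
    rw [← hPd]
    beta_reduce
    unfold Cas GR Dpm
    rw [hS]
    have hl := exp_log_im hε (σ-ρ) u.im (by linarith)
    have e1 : Complex.exp (-(1/2 + k₁ + I*σ - (3/2 - k₁ + I*ρ)) * Complex.log u) *
       Complex.exp (-(2 - k₁ + I*t - (k₁ + I*t)) * Complex.log u) *
       Complex.exp (I * ((σ - ρ : ℝ):ℂ) * (Complex.log u - Complex.log (I * u.im))) * u *
       Complex.exp ((I*((σ-ρ:ℝ):ℂ)) * Complex.log (I * u.im)) = 1 := by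
      have eu := Complex.exp_log hu
      generalize hL : Complex.log u = L at *
      generalize Complex.log (I * u.im) = L2 at *
      rw [← eu]
      rw [← Complex.exp_add, ← Complex.exp_add, ← Complex.exp_add, ← Complex.exp_add]
      refine Eq.trans ?_ Complex.exp_zero
      congr 1; push_cast; ring
    rw [hl] at e1
    have e2 : Complex.exp ((ε * (Real.pi / 2) * (ρ + σ + 2 * t) : ℝ)) =
        Complex.exp ((ε*Real.pi*(σ+t) : ℝ)) * Complex.exp ((-(ε * (Real.pi/2) * (σ-ρ)) : ℝ)) := by
      rw [← Complex.exp_add]; congr 1; push_cast; ring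
    have e3 : Complex.exp ((t * (2 * φ - Real.pi) : ℝ)) = Complex.exp (t * (2*φ - Real.pi)) := by
      push_cast; rfl
    have e4 : I * ((σ:ℂ)-ρ) = I * ((σ-ρ:ℝ):ℂ) := by push_cast; rfl
    rw [e2, e3, e4]
    generalize Complex.exp (-(1/2 + k₁ + I*σ - (3/2 - k₁ + I*ρ)) * Complex.log u) = x1 at *
    generalize Complex.exp (-(2 - k₁ + I*t - (k₁ + I*t)) * Complex.log u) = x2 at *
    generalize Complex.exp (I * ((σ - ρ : ℝ):ℂ) * (Complex.log u - Complex.log (I * u.im))) = x3 at *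
    generalize ((|u.im| : ℝ) : ℂ) ^ (I * ((σ-ρ:ℝ):ℂ)) = x4 at *
    generalize Complex.exp ((-(ε * (Real.pi/2) * (σ-ρ)) : ℝ)) = x5 at *
    generalize Complex.exp ((ε*Real.pi*(σ+t) : ℝ)) = x6 at *
    generalize Complex.exp (t * (2*φ - Real.pi)) = x7 at *
    generalize Br k₁ k₂ t ρ σ u = b at *
    generalize Complex.Gamma (u + (1/2 + k₁ + I*σ)) / Complex.Gamma (u + (3/2 - k₁ + I*ρ)) = G1 at *
    generalize Complex.Gamma (u + (2 - k₁ + I*t)) / Complex.Gamma (u + (k₁ + I*t)) = G2 at *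
    generalize g u = gu
    push_cast
    rw [div_eq_mul_one_div I]
    generalize (1 / (2 * (Real.pi:ℂ))) = q1
    linear_combination (-(-q1 * x7 * (ε * I * x6 * gu) * (G1 * G2) * b * I)) * e1
  have h5 : (fun u => P u * (-I * (u * Br k₁ k₂ t ρ σ u)) - ((ρ:ℂ)+σ)) =O[LF ε] fun u => u⁻¹ := by
    have a1 := IsBigO.mul ((hP.tendsto hε).isBigO_one ℂ) (hB.const_mul_left (-I))
    have a2 := IsBigO.const_mul_left (show (fun u => P u - 1) =O[LF ε] fun u => u⁻¹ from hP) ((ρ:ℂ)+σ)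
    simp only [one_mul] at a1
    refine (a1.add a2).congr_left fun u => ?_
    linear_combination (P u * ((ρ:ℂ)+σ)) * Complex.I_sq
  have h6 : (fun u : ℂ => (ε:ℂ) * Dpm t φ ε ρ σ * ((|u.im| : ℝ) : ℂ) ^ (I * ((σ:ℂ)-ρ))) =O[LF ε] fun _ => (1:ℂ) := by
    refine IsBigO.of_bound ‖(ε:ℂ) * Dpm t φ ε ρ σ‖ ?_
    filter_upwards [LF_ev ε 1] with u ⟨_, h⟩
    have hu : u.im ≠ 0 := by intro h0; rw [h0] at h; simp at h; linarith
    have := norm_cpow_I u.im (σ-ρ) hu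
    push_cast at this
    rw [norm_mul, this]; simp
  have h7 := h6.mul h5
  simp only [one_mul] at h7
  refine h7.congr' ?_ EventuallyEq.rfl
  filter_upwards [key] with u hu
  rw [hu]; ring
end

lemma Gamma_diff_im {w : ℂ} (h : w.im ≠ 0) : DifferentiableAt ℂ Complex.Gamma w := by
  refine Complex.differentiableAt_Gamma w fun m hm => h ?_
  rw [hm]; simp

def Yc (k₁ t ρ σ : ℝ) : ℝ := |1 - 3*k₁/2| + 1 + |ρ| + |σ| + |t|

def Sc (k₁ t ρ σ : ℝ) : Set ℂ := {u | (-1 ≤ u.re ∧ u.re ≤ 0) ∧ Yc k₁ t ρ σ < |u.im|}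

lemma FF_diff (k₁ k₂ t ρ : ℝ) (hk₁ : 1 < k₁) (S : Set ℂ) (f : ℂ → ℂ) (hf : DifferentiableOn ℂ f S)
    (h1 : ∀ u ∈ S, -1 ≤ (f u).re) (h2 : ∀ u ∈ S, |1 - 3*k₁/2| + 1 + |ρ| < |(f u).im|) :
    DifferentiableOn ℂ (fun u => FF k₁ k₂ t ρ (f u)) S := by
  have h := F32_differentiableOn ((k₂ : ℂ) - (k₁ : ℂ) + 1/2 + I * ρ) (3/2 - (k₁ : ℂ) - (k₂ : ℂ) + I * ρ)
      (1/2 - I * t + I * ρ) (1 + 2 * I * ρ) (1 - 3*k₁/2) (by simp; norm_num; linarith)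
  refine DifferentiableOn.comp (g := fun e => F32 _ _ _ _ e 1) (f := fun u => 3/2 - (k₁ : ℂ) + f u + I * ρ)
    h ?_ ?_
  · exact ((differentiableOn_const _).add hf).add (differentiableOn_const _)
  · intro u hu
    have a1 := h1 u hu
    have a2 := h2 u hu
    constructor
    · simp; norm_num; linarith
    · have : |(f u).im| ≤ |(f u).im + ρ| + |ρ| := by
        have := abs_sub ((f u).im + ρ) ρ
        simpa using this
      simp; linarith

lemma shift_ne {k₁ t ρ σ : ℝ} {u : ℂ} (hu : Yc k₁ t ρ σ < |u.im|) {c : ℝ} (hc : |c| ≤ |ρ| + |σ| + |t|) :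
    u.im + c ≠ 0 := by
  intro h0
  have : |u.im| = |c| := by rw [eq_neg_of_add_eq_zero_left h0, abs_neg]
  unfold Yc at hu
  have := abs_nonneg (1 - 3*k₁/2)
  linarith

lemma Cas_diff (k₁ k₂ t φ ρ σ : ℝ) (hk₁ : 1 < k₁) :
    DifferentiableOn ℂ (Cas k₁ k₂ t φ ρ σ) (Sc k₁ t ρ σ) := by
  have at0 := abs_nonneg t
  have ar0 := abs_nonneg ρ
  have as0 := abs_nonneg σ
  have nz : ∀ u ∈ Sc k₁ t ρ σ, ∀ c : ℂ, |c.im| ≤ |ρ|+|σ|+|t| → (u + c).im ≠ 0 := by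
    intro u hu c hc
    simpa using shift_ne hu.2 hc
  have nz' : ∀ u ∈ Sc k₁ t ρ σ, ∀ c : ℂ, |c.im| ≤ |ρ|+|σ|+|t| → (u + c) ≠ 0 := by
    intro u hu c hc h0
    exact nz u hu c hc (by rw [h0]; simp)
  have hSS : DifferentiableOn ℂ (SS k₁ k₂ t σ) (Sc k₁ t ρ σ) := by
    unfold SS
    refine DifferentiableOn.div (by fun_prop) (by fun_prop) fun u hu => ?_
    exact mul_ne_zero (sin_pi_ne_zero (nz u hu _ (by simp; positivity))) (sin_pi_ne_zero (nz u hu _ (by simp; positivity)))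
  have hG : ∀ c : ℂ, |c.im| ≤ |ρ|+|σ|+|t| → DifferentiableOn ℂ (fun u => Complex.Gamma (u + c)) (Sc k₁ t ρ σ) := by
    intro c hc u hu
    refine DifferentiableAt.differentiableWithinAt ?_
    exact (Gamma_diff_im (nz u hu c hc)).comp u (by fun_prop)
  have hGR : DifferentiableOn ℂ (GR k₁ t ρ σ) (Sc k₁ t ρ σ) := by
    unfold GR
    refine DifferentiableOn.mul (DifferentiableOn.div (hG _ ?_) (hG _ ?_) fun u hu => Gamma_ne_zero_of_im (nz u hu _ ?_))
      (DifferentiableOn.div (hG _ ?_) (hG _ ?_) fun u hu => Gamma_ne_zero_of_im (nz u hu _ ?_)) <;>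
    · simp; try linarith
  have hrr : DifferentiableOn ℂ (rr k₁ k₂ ρ σ) (Sc k₁ t ρ σ) := by
    unfold rr
    refine DifferentiableOn.div (by fun_prop) (by fun_prop) fun u hu => ?_
    exact mul_ne_zero (nz' u hu _ (by simp; linarith)) (nz' u hu _ (by simp; linarith))
  have hY : ∀ u ∈ Sc k₁ t ρ σ, |1 - 3*k₁/2| + 1 + |ρ| < |u.im| := by
    intro u hu; have := hu.2; unfold Yc at this; linarith
  have hY' : ∀ u ∈ Sc k₁ t ρ σ, |1 - 3*k₁/2| + 1 + |(-σ)| < |u.im| := by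
    intro u hu; have := hu.2; unfold Yc at this; rw [abs_neg]; linarith
  have hBr : DifferentiableOn ℂ (Br k₁ k₂ t ρ σ) (Sc k₁ t ρ σ) := by
    unfold Br
    refine DifferentiableOn.sub (DifferentiableOn.mul ?_ ?_) (hrr.mul (DifferentiableOn.mul ?_ ?_))
    · exact FF_diff _ _ _ _ hk₁ _ (fun u => u) (by fun_prop) (fun u hu => hu.1.1) hY
    · exact FF_diff _ _ _ _ hk₁ _ (fun u => -(u+1)) (by fun_prop) (fun u hu => by simp; linarith [hu.1.2])
        (by simpa [-neg_add_rev, abs_sub_comm, abs_neg] using hY')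
    · exact FF_diff _ _ _ _ hk₁ _ (fun u => u+1) (by fun_prop) (fun u hu => by simp; linarith [hu.1.1])
        (by simpa using hY)
    · exact FF_diff _ _ _ _ hk₁ _ (fun u => -u) (by fun_prop) (fun u hu => by simp; linarith [hu.1.2])
        (by simpa using hY')
  unfold Cas
  exact ((((differentiableOn_const _).mul (differentiableOn_const _)).mul hSS).mul hGR).mul hBr

lemma Wron_eq (k₁ k₂ t φ ρ σ : ℝ) (x : ℝ) (hx : |t|+|ρ|+|σ| < |x|) :
    Wron k₁ k₂ t φ (PhiC k₁ k₂ t φ (ρ : ℂ)) (PhiC k₁ k₂ t φ (σ : ℂ)) x =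
      ∫ s in (0:ℝ)..1, I * Cas k₁ k₂ t φ ρ σ (I * x - s) := by
  unfold Wron
  congr 1
  ext s
  rw [integrand_eq _ _ _ _ _ _ _ (by simpa using hx)]
  congr 2
  linear_combination (s:ℂ) * Complex.I_sq

lemma Cas_cont (k₁ k₂ t φ ρ σ : ℝ) (hk₁ : 1 < k₁) (x : ℝ) (hx : Yc k₁ t ρ σ < |x|) :
    ContinuousOn (fun s : ℝ => I * Cas k₁ k₂ t φ ρ σ (I * x - s)) (Set.uIcc 0 1) := by
  refine continuousOn_const.mul ((Cas_diff k₁ k₂ t φ ρ σ hk₁).continuousOn.comp (by fun_prop) ?_)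
  intro s hs
  rw [Set.uIcc_of_le zero_le_one] at hs
  refine ⟨⟨?_, ?_⟩, ?_⟩ <;> simp
  · exact hs.2
  · exact hs.1
  · exact hx

lemma Wron_bound {ε : ℝ} (hε : ε = 1 ∨ ε = -1) (k₁ k₂ t φ ρ σ : ℝ) (hk₁ : 1 < k₁) :
    ∃ K Y : ℝ, 0 < K ∧ Yc k₁ t ρ σ < Y ∧ ∀ x : ℝ, Y ≤ ε * x →
      ‖(∫ s in (0:ℝ)..1, I * Cas k₁ k₂ t φ ρ σ (I * x - s)) -
        ε * Dpm t φ ε ρ σ * ((ρ:ℂ)+σ) * ((|x| : ℝ) : ℂ) ^ (I * ((σ:ℂ)-ρ))‖ ≤ K / |x| := by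
  obtain ⟨K, hK, h⟩ := (Cas_asymp hε k₁ k₂ t φ ρ σ hk₁).exists_pos
  obtain ⟨N, hN⟩ := LF_ex h.bound
  have hY0 : 0 < Yc k₁ t ρ σ := by unfold Yc; positivity
  refine ⟨K, max N (Yc k₁ t ρ σ + 1), hK, by apply lt_max_of_lt_right; linarith, fun x hx => ?_⟩
  rw [max_le_iff] at hx
  have hxa : |x| = ε * x := eps_abs hε (by linarith)
  have hc := (Cas_cont k₁ k₂ t φ ρ σ hk₁ x (by linarith)).intervalIntegrable (μ := volume)
  have hx0 : 0 < |x| := by linarith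
  set c : ℂ := ε * Dpm t φ ε ρ σ * ((ρ:ℂ)+σ) * ((|x| : ℝ) : ℂ) ^ (I * ((σ:ℂ)-ρ)) with hcd
  have e : (∫ s in (0:ℝ)..1, I * Cas k₁ k₂ t φ ρ σ (I * x - s)) - c =
      ∫ s in (0:ℝ)..1, (I * Cas k₁ k₂ t φ ρ σ (I * x - s) - c) := by
    rw [intervalIntegral.integral_sub hc intervalIntegrable_const]; simp
  rw [e]
  have := intervalIntegral.norm_integral_le_of_norm_le_const (a := (0:ℝ)) (b := 1) (C := K/|x|)
    (f := fun s : ℝ => I * Cas k₁ k₂ t φ ρ σ (I * x - s) - c) (fun s hs => by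
      rw [Set.uIoc_of_le zero_le_one] at hs
      have h1 := hN (I * x - s) (by simp; exact hs.2) (by simp; exact hs.1.le) (by simpa using hx.1)
      have him : (I * (x:ℂ) - s).im = x := by simp
      rw [him] at h1
      refine h1.trans ?_
      rw [norm_inv, div_eq_mul_inv]
      have := Complex.abs_im_le_norm (I * (x:ℂ) - s)
      rw [him] at this
      gcongr)
  simpa using this

lemma FF_three (k₁ k₂ t : ℝ) (hk₁ : 1 < k₁) (u : ℂ) (hu : u.re = 0) (hi : u.im ≠ 0) :
    (u+3/2-k₁)*(u+1/2-k₁)*(u+k₁-1+I*t)*FF k₁ k₂ t 0 (u-1) +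
      (u+1-k₂)*(u+k₂)*(u+1-k₁+I*t)*FF k₁ k₂ t 0 (u+1) =
    ((u+3/2-k₁)*(u+1/2-k₁)*(u+k₁-1+I*t) + (u+1-k₂)*(u+k₂)*(u+1-k₁+I*t) +
      (k₂-k₁+1/2)*(3/2-k₁-k₂)*(1/2-I*t))*FF k₁ k₂ t 0 u := by
  have nz : ∀ c : ℝ, u + c ≠ 0 := by
    intro c h0
    have := congrArg Complex.im h0
    simp at this; exact hi this
  have h := F32_three_term ((k₂:ℂ)-k₁+1/2) (3/2-k₁-k₂) (1/2-I*t) 1 (u+3/2-k₁) (by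
    simp [hu]; norm_num; linarith) (by intro n; exact_mod_cast (Nat.succ_ne_zero n ∘ fun h => by omega))
    (by have := nz (1/2-k₁); push_cast at this; intro h; apply this; linear_combination h)
    (by intro n; have := nz (3/2-k₁+n); push_cast at this; intro h; apply this; linear_combination h)
  have e1 : FF k₁ k₂ t 0 (u-1) = F32 ((k₂:ℂ)-k₁+1/2) (3/2-k₁-k₂) (1/2-I*t) 1 (u+3/2-k₁-1) 1 := by
    unfold FF; congr 1 <;> simp; ring
  have e2 : FF k₁ k₂ t 0 (u+1) = F32 ((k₂:ℂ)-k₁+1/2) (3/2-k₁-k₂) (1/2-I*t) 1 (u+3/2-k₁+1) 1 := by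
    unfold FF; congr 1 <;> simp; ring
  have e3 : FF k₁ k₂ t 0 u = F32 ((k₂:ℂ)-k₁+1/2) (3/2-k₁-k₂) (1/2-I*t) 1 (u+3/2-k₁) 1 := by
    unfold FF; congr 1 <;> simp; ring
  rw [e1, e2, e3]
  linear_combination h

lemma SS_per (k₁ k₂ t σ : ℝ) (u : ℂ) : SS k₁ k₂ t σ (u-1) = SS k₁ k₂ t σ u := by
  have h : ∀ a : ℂ, Complex.sin (Real.pi * (u - 1 + a)) = - Complex.sin (Real.pi * (u + a)) := by
    intro a
    rw [← Complex.sin_sub_pi]; congr 1; ring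
  unfold SS
  simp only [h, neg_mul_neg]

lemma GR_step (k₁ t : ℝ) (u : ℂ) (hi : u.im ≠ 0) (hi' : u.im + t ≠ 0) :
    GR k₁ t 0 0 u * ((u+1/2-k₁)*(u+k₁-1+I*t)) = GR k₁ t 0 0 (u-1) * ((u+k₁-1/2)*(u+1-k₁+I*t)) := by
  have g : ∀ c : ℂ, (u + c).im ≠ 0 → Complex.Gamma (u + c) = (u - 1 + c) * Complex.Gamma (u - 1 + c) := by
    intro c hc
    rw [← Complex.Gamma_add_one]
    · congr 1; ring
    · intro h; apply hc
      have := congrArg Complex.im h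
      simpa using this
  unfold GR
  have i1 : (u + (1/2 + k₁ + I*((0:ℝ):ℂ))).im ≠ 0 := by simpa using hi
  have i2 : (u + (3/2 - k₁ + I*((0:ℝ):ℂ))).im ≠ 0 := by simpa using hi
  have i3 : (u + (2 - k₁ + I*t)).im ≠ 0 := by simpa using hi'
  have i4 : (u + (k₁ + I*t)).im ≠ 0 := by simpa using hi'
  have n2 := Gamma_ne_zero_of_im (w := u - 1 + (3/2 - k₁ + I*((0:ℝ):ℂ))) (by simpa using hi)
  have n4 := Gamma_ne_zero_of_im (w := u - 1 + (k₁ + I*t)) (by simpa using hi')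
  have m2 : u - 1 + (3/2 - k₁ + I*((0:ℝ):ℂ)) ≠ 0 := by
    intro h; have := congrArg Complex.im h; simp at this; exact hi this
  have m4 : u - 1 + (k₁ + I*t) ≠ 0 := by
    intro h; have := congrArg Complex.im h; simp at this; exact hi' this
  rw [g _ i1, g _ i2, g _ i3, g _ i4]
  generalize Complex.Gamma (u - 1 + (1/2 + k₁ + I*((0:ℝ):ℂ))) = G1 at *
  generalize Complex.Gamma (u - 1 + (3/2 - k₁ + I*((0:ℝ):ℂ))) = G2 at *
  generalize Complex.Gamma (u - 1 + (2 - k₁ + I*t)) = G3 at *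
  generalize Complex.Gamma (u - 1 + (k₁ + I*t)) = G4 at *
  rw [show u+1/2-(k₁:ℂ) = u - 1 + (3/2 - k₁ + I*((0:ℝ):ℂ)) by push_cast; ring,
    show u+k₁-1+I*t = u - 1 + (k₁ + I*t) by ring,
    show u+k₁-1/2 = u - 1 + (1/2 + k₁ + I*((0:ℝ):ℂ)) by push_cast; ring,
    show u+1-(k₁:ℂ)+I*t = u - 1 + (2 - k₁ + I*t) by ring]
  generalize u - 1 + (1/2 + k₁ + I*((0:ℝ):ℂ)) = c1 at *
  generalize u - 1 + (3/2 - k₁ + I*((0:ℝ):ℂ)) = c2 at *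
  generalize u - 1 + (2 - k₁ + I*t) = c3 at *
  generalize u - 1 + (k₁ + I*t) = c4 at *
  field_simp

lemma Cas_per (k₁ k₂ t φ : ℝ) (hk₁ : 1 < k₁) (u : ℂ) (hu : u.re = 0) (hi : u.im ≠ 0) (hi' : u.im + t ≠ 0) :
    Cas k₁ k₂ t φ 0 0 (u-1) = Cas k₁ k₂ t φ 0 0 u := by
  unfold Cas
  rw [SS_per]
  have T1 := FF_three k₁ k₂ t hk₁ u hu hi
  have T2 := FF_three k₁ k₂ (-t) hk₁ (-u) (by simpa using hu) (by simpa using hi)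
  have G := GR_step k₁ t u hi hi'
  suffices h : GR k₁ t 0 0 (u-1) * Br k₁ k₂ t 0 0 (u-1) = GR k₁ t 0 0 u * Br k₁ k₂ t 0 0 u by
    rw [mul_assoc, h, ← mul_assoc]
  unfold Br rr
  simp only [Complex.ofReal_zero, mul_zero, add_zero, neg_zero, sub_add_cancel, neg_sub, neg_add_rev]
  have f1 : FF k₁ k₂ (-t) 0 (-u + 1) = FF k₁ k₂ (-t) 0 (1 - u) := by congr 1; ring
  have f2 : FF k₁ k₂ (-t) 0 (-u - 1) = FF k₁ k₂ (-t) 0 (-1 + -u) := by congr 1; ring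
  rw [f1, f2] at T2
  push_cast at T2
  generalize FF k₁ k₂ t 0 (u-1) = Fm at *
  generalize FF k₁ k₂ t 0 (u+1) = Fp at *
  generalize FF k₁ k₂ t 0 u = F0 at *
  generalize FF k₁ k₂ (-t) 0 (1-u) = Sp at *
  generalize FF k₁ k₂ (-t) 0 (-1+-u) = Sm at *
  generalize FF k₁ k₂ (-t) 0 (-u) = S0 at *
  generalize GR k₁ t 0 0 (u-1) = g' at *
  generalize GR k₁ t 0 0 u = g at *
  have nz : ∀ c : ℂ, c.im = 0 → u + c ≠ 0 := by
    intro c hc h0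
    have := congrArg Complex.im h0
    simp [hc] at this; exact hi this
  have nt : ∀ c : ℂ, c.im = t → u + c ≠ 0 := by
    intro c hc h0
    have := congrArg Complex.im h0
    simp [hc] at this; exact hi' this
  have a1 : u+3/2-(k₁:ℂ) ≠ 0 := by rw [add_sub_assoc]; exact nz _ (by simp)
  have a2 : u+1/2-(k₁:ℂ) ≠ 0 := by rw [add_sub_assoc]; exact nz _ (by simp)
  have a3 : u+(k₁:ℂ)-1/2 ≠ 0 := by rw [add_sub_assoc]; exact nz _ (by simp)
  have a4 : u+(k₁:ℂ)-3/2 ≠ 0 := by rw [add_sub_assoc]; exact nz _ (by simp)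
  have a5 : u+(k₁:ℂ)-1+I*t ≠ 0 := by
    rw [add_sub_assoc, add_assoc]; exact nt _ (by simp)
  have b1 : (u - 1 + (3/2 - (k₁:ℂ))) = u+1/2-(k₁:ℂ) := by ring
  have b2 : (u - 1 + ((k₁:ℂ) - 1/2)) = u+(k₁:ℂ)-3/2 := by ring
  have b3 : (u + (3/2 - (k₁:ℂ))) = u+3/2-(k₁:ℂ) := by ring
  have b4 : (u + ((k₁:ℂ) - 1/2)) = u+(k₁:ℂ)-1/2 := by ring
  rw [b1, b2, b3, b4]
  have hg : g = g' * ((u+k₁-1/2)*(u+1-k₁+I*t)) / ((u+1/2-k₁)*(u+k₁-1+I*t)) := by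
    rw [eq_div_iff (mul_ne_zero a2 a5)]; exact G
  -- express both sides
  have hL : Fm * S0 + (u+1-k₂)*(u+k₂)*(u+1-k₁+I*t)/((u+3/2-k₁)*(u+1/2-k₁)*(u+k₁-1+I*t)) * (Fp*S0) =
      ((u+3/2-k₁)*(u+1/2-k₁)*(u+k₁-1+I*t) + (u+1-k₂)*(u+k₂)*(u+1-k₁+I*t) +
      (k₂-k₁+1/2)*(3/2-k₁-k₂)*(1/2-I*t)) / ((u+3/2-k₁)*(u+1/2-k₁)*(u+k₁-1+I*t)) * (F0*S0) := by
    have hd := mul_ne_zero (mul_ne_zero a1 a2) a5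
    rw [div_mul_eq_mul_div, div_mul_eq_mul_div, eq_div_iff hd, add_mul, div_mul_cancel₀ _ hd]
    linear_combination S0 * T1
  have hR : (u+k₁-1/2)*(u+1-k₁+I*t) / ((u+1/2-k₁)*(u+k₁-1+I*t)) * (F0*Sm) +
      (u-k₂)*(u-1+k₂)/((u+1/2-k₁)*(u+k₁-3/2)) * (F0*Sp) =
      ((u+3/2-k₁)*(u+1/2-k₁)*(u+k₁-1+I*t) + (u+1-k₂)*(u+k₂)*(u+1-k₁+I*t) +
      (k₂-k₁+1/2)*(3/2-k₁-k₂)*(1/2-I*t)) / ((u+3/2-k₁)*(u+1/2-k₁)*(u+k₁-1+I*t)) * (F0*S0) := by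
    have hM : ((u+3/2-k₁)*(u+1/2-k₁)*(u+k₁-1+I*t) + (u+1-k₂)*(u+k₂)*(u+1-k₁+I*t) +
      (k₂-k₁+1/2)*(3/2-k₁-k₂)*(1/2-I*t)) * (u+k₁-3/2) = -(u+3/2-k₁) * ((-u+3/2-k₁)*(-u+1/2-k₁)*(-u+k₁-1+I*-t) + (-u+1-k₂)*(-u+k₂)*(-u+1-k₁+I*-t) +
      (k₂-k₁+1/2)*(3/2-k₁-k₂)*(1/2-I*-t)) := by ring
    generalize ((u+3/2-k₁)*(u+1/2-k₁)*(u+k₁-1+I*t) + (u+1-k₂)*(u+k₂)*(u+1-k₁+I*t) +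
      (k₂-k₁+1/2)*(3/2-k₁-k₂)*(1/2-I*t)) = M at *
    generalize ((-u+3/2-k₁)*(-u+1/2-k₁)*(-u+k₁-1+I*-t) + (-u+1-k₂)*(-u+k₂)*(-u+1-k₁+I*-t) +
      (k₂-k₁+1/2)*(3/2-k₁-k₂)*(1/2-I*-t)) = M' at *
    have hM' : M / ((u+3/2-k₁)*(u+1/2-k₁)*(u+k₁-1+I*t)) = - M' / ((u+1/2-k₁)*(u+k₁-1+I*t)*(u+k₁-3/2)) := by
      rw [div_eq_div_iff (mul_ne_zero (mul_ne_zero a1 a2) a5) (mul_ne_zero (mul_ne_zero a2 a5) a4)]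
      linear_combination ((u+1/2-k₁)*(u+k₁-1+I*t)) * hM
    rw [hM']
    have : (u+k₁-1/2)*(u+1-k₁+I*t) * (u+k₁-3/2) * Sm + (u-k₂)*(u-1+k₂)*(u+k₁-1+I*t)*Sp = -M'*S0 := by
      linear_combination -T2
    rw [div_mul_eq_mul_div, div_mul_eq_mul_div, div_mul_eq_mul_div, div_add_div _ _ (mul_ne_zero a2 a5) (mul_ne_zero a2 a4),
      div_eq_div_iff (mul_ne_zero (mul_ne_zero a2 a5) (mul_ne_zero a2 a4)) (mul_ne_zero (mul_ne_zero a2 a5) a4)]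
    linear_combination (F0 * (u+1/2-k₁)*((u+1/2-k₁)*(u+k₁-1+I*t)*(u+k₁-3/2))) * this
  have hh : (u+1-k₂)*(u+k₂)*(u+1-k₁+I*t)/((u+3/2-k₁)*(u+1/2-k₁)*(u+k₁-1+I*t)) =
      ((u+k₁-1/2)*(u+1-k₁+I*t)) / ((u+1/2-k₁)*(u+k₁-1+I*t)) * ((u + (1-k₂))*(u+k₂)/((u+3/2-k₁)*(u+k₁-1/2))) := by
    rw [div_mul_div_comm, div_eq_div_iff (mul_ne_zero (mul_ne_zero a1 a2) a5)
      (mul_ne_zero (mul_ne_zero a2 a5) (mul_ne_zero a1 a3))]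
    ring
  rw [hh] at hL
  rw [hg]
  have b5 : u - 1 + (1 - (k₂:ℂ)) = u - k₂ := by ring
  rw [b5, mul_div_assoc g']
  linear_combination g' * (hL - hR)

lemma W_zero {ε : ℝ} (hε : ε = 1 ∨ ε = -1) (k₁ k₂ t φ : ℝ) (hk₁ : 1 < k₁) (x : ℝ) (hx : Yc k₁ t 0 0 < ε * x) :
    (∫ s in (0:ℝ)..1, I * Cas k₁ k₂ t φ 0 0 (I * x - s)) = 0 := by
  set W : ℝ → ℂ := fun x => ∫ s in (0:ℝ)..1, I * Cas k₁ k₂ t φ 0 0 (I * x - s) with hW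
  have hY0 : 0 < Yc k₁ t 0 0 := by unfold Yc; positivity
  have hconst : ∀ y : ℝ, Yc k₁ t 0 0 < ε * y → W y = W x := by
    intro y hy
    have hmem : ∀ v ∈ Set.uIcc x y, Yc k₁ t 0 0 < |v| := by
      intro v hv
      have : Yc k₁ t 0 0 < ε * v := by
        rcases hε with rfl | rfl
        · simp only [one_mul] at *
          exact lt_of_lt_of_le (lt_min hx hy) hv.1
        · simp only [neg_mul, one_mul] at *
          have : v ≤ max x y := hv.2
          rcases le_max_iff.1 this with h | h <;> linarith
      rw [eps_abs hε (by linarith)]; exact this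
    have hr := Complex.integral_boundary_rect_eq_zero_of_differentiableOn (Cas k₁ k₂ t φ 0 0)
      (⟨-1, x⟩ : ℂ) (⟨0, y⟩ : ℂ) ((Cas_diff k₁ k₂ t φ 0 0 hk₁).mono (by
        intro u hu
        rw [Complex.mem_reProdIm] at hu
        have h1 : u.re ∈ Set.uIcc (-1:ℝ) 0 := hu.1
        rw [Set.uIcc_of_le (by norm_num)] at h1
        exact ⟨⟨h1.1, h1.2⟩, hmem _ hu.2⟩))
    simp only at hr
    have hv : (∫ v in x..y, Cas k₁ k₂ t φ 0 0 (((0:ℝ):ℂ) + v * I)) = ∫ v in x..y, Cas k₁ k₂ t φ 0 0 (((-1:ℝ):ℂ) + v * I) := by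
      refine intervalIntegral.integral_congr fun v hv => ?_
      have hv' := hmem v hv
      have := Cas_per k₁ k₂ t φ hk₁ (((0:ℝ):ℂ) + v * I) (by simp) (by
        simp; intro h; rw [h] at hv'; simp at hv'; linarith) (by
        have := shift_ne (u := ((0:ℝ):ℂ) + v * I) (c := t) (by simpa using hv') (by simp)
        exact this)
      rw [← this]; congr 1; push_cast; ring
    rw [hv, add_sub_cancel_right, sub_eq_zero] at hr
    have hWW : ∀ z : ℝ, W z = I * ∫ s in (-1:ℝ)..0, Cas k₁ k₂ t φ 0 0 (s + z * I) := by
      intro z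
      rw [hW]
      simp only [intervalIntegral.integral_const_mul]
      congr 1
      have := intervalIntegral.integral_comp_neg (a := (0:ℝ)) (b := 1) (fun s : ℝ => Cas k₁ k₂ t φ 0 0 (s + z * I))
      rw [neg_zero] at this
      rw [← this]
      congr 1; ext s; congr 1; push_cast; ring
    rw [hWW, hWW]
    rw [hr]
  obtain ⟨K, Y, hK, hY, hb⟩ := Wron_bound hε k₁ k₂ t φ 0 0 hk₁
  by_contra hne
  have hpos : 0 < ‖W x‖ := norm_pos_iff.2 hne
  set R := max Y (2*K/‖W x‖) with hR
  have hεε : ε * (ε * R) = R := by rcases hε with rfl | rfl <;> simp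
  have h1 := hb (ε * R) (by rw [hεε]; exact le_max_left _ _)
  have h2 := hconst (ε * R) (by rw [hεε]; exact lt_of_lt_of_le hY (le_max_left _ _))
  have hR0 : 0 < R := lt_of_lt_of_le (hY0.trans hY) (le_max_left _ _)
  have hRa : |ε * R| = R := by rcases hε with rfl | rfl <;> simp [abs_of_pos hR0]
  simp only [Complex.ofReal_zero, add_zero, mul_zero, zero_mul, sub_zero] at h1
  change ‖W (ε * R)‖ ≤ _ at h1
  rw [h2, hRa, le_div_iff₀ hR0] at h1
  have h3 : 2*K/‖W x‖ ≤ R := le_max_right _ _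
  rw [div_le_iff₀ hpos] at h3
  linarith

lemma final_eps {ε : ℝ} (hε : ε = 1 ∨ ε = -1) (k₁ k₂ : ℝ) (hk₁ : 1 < k₁) (t φ ρ σ : ℝ)
    (hρ : 0 ≤ ρ) (hσ : 0 ≤ σ) : ∃ C Y : ℝ, 0 < Y ∧ ∀ x : ℝ, Y ≤ ε * x →
    ‖Wron k₁ k₂ t φ (PhiC k₁ k₂ t φ (ρ : ℂ)) (PhiC k₁ k₂ t φ (σ : ℂ)) x -
        ε * Dpm t φ ε ρ σ * ((ρ : ℂ) + σ) * ((|x| : ℝ) : ℂ) ^ (I * ((σ : ℂ) - ρ))‖ ≤ C * ‖(ρ+σ)/x‖ := by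
  have hY0 : 0 < Yc k₁ t ρ σ := by unfold Yc; positivity
  have hYY : |t|+|ρ|+|σ| < Yc k₁ t ρ σ := by
    unfold Yc; have := abs_nonneg (1 - 3*k₁/2); linarith
  rcases (add_nonneg hρ hσ).eq_or_lt with h0 | h0
  · have hρ0 : ρ = 0 := by linarith
    have hσ0 : σ = 0 := by linarith
    subst hρ0; subst hσ0
    refine ⟨0, Yc k₁ t 0 0 + 1, by linarith, fun x hx => ?_⟩
    rw [Wron_eq _ _ _ _ _ _ _ (by rw [eps_abs hε (y := x) (by linarith)]; linarith), W_zero hε _ _ _ _ hk₁ _ (by linarith)]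
    simp
  · obtain ⟨K, Y, hK, hY, hb⟩ := Wron_bound hε k₁ k₂ t φ ρ σ hk₁
    refine ⟨K/(ρ+σ), Y, by linarith, fun x hx => ?_⟩
    rw [Wron_eq _ _ _ _ _ _ _ (by rw [eps_abs hε (y := x) (by linarith)]; linarith)]
    refine (hb x hx).trans (le_of_eq ?_)
    rw [norm_div, Real.norm_eq_abs, Real.norm_eq_abs, abs_of_pos h0]
    field_simp
/-- Asymptotics of the Wronskian `[Φ_ρ, Φ_σ](x)`:
`[Φ_ρ, Φ_σ](x) = ± D^{±}(ρ,σ)(ρ+σ)|x|^{i(σ−ρ)}(1 + O(1/x))` as `x → ±∞`. -/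
theorem wronskian_PhiPhi_asymptotics (k₁ k₂ : ℝ) (hk₁ : 1 < k₁) (hk₂ : 1 < k₂) (t : ℝ)
    (φ : ℝ) (hφ₀ : 0 < φ) (hφπ : φ < Real.pi) (ρ σ : ℝ) (hρ : 0 ≤ ρ) (hσ : 0 ≤ σ) :
    ((fun x : ℝ => Wron k₁ k₂ t φ (PhiC k₁ k₂ t φ (ρ : ℂ)) (PhiC k₁ k₂ t φ (σ : ℂ)) x -
        Dpm t φ 1 ρ σ * ((ρ : ℂ) + σ) * ((|x| : ℝ) : ℂ) ^ (I * ((σ : ℂ) - ρ)))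
      =O[atTop] fun x : ℝ => (ρ + σ) / x) ∧
    ((fun x : ℝ => Wron k₁ k₂ t φ (PhiC k₁ k₂ t φ (ρ : ℂ)) (PhiC k₁ k₂ t φ (σ : ℂ)) x +
        Dpm t φ (-1) ρ σ * ((ρ : ℂ) + σ) * ((|x| : ℝ) : ℂ) ^ (I * ((σ : ℂ) - ρ)))
      =O[atBot] fun x : ℝ => (ρ + σ) / x) := by
  constructor
  · obtain ⟨C, Y, hY, h⟩ := final_eps (Or.inl rfl) k₁ k₂ hk₁ t φ ρ σ hρ hσ
    refine IsBigO.of_bound C ?_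
    filter_upwards [eventually_ge_atTop Y] with x hx
    have := h x (by simpa using hx)
    simpa only [Complex.ofReal_one, one_mul] using this
  · obtain ⟨C, Y, hY, h⟩ := final_eps (Or.inr rfl) k₁ k₂ hk₁ t φ ρ σ hρ hσ
    refine IsBigO.of_bound C ?_
    filter_upwards [eventually_le_atBot (-Y)] with x hx
    have := h x (by linarith)
    simpa only [Complex.ofReal_neg, Complex.ofReal_one, neg_mul, one_mul, sub_neg_eq_add] using this
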